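/- arXiv:2506.22428 — 7 statements merged into one kernel-verified Lean document; each statement's English description precedes it below -/
import Mathlib

section
/- For every μ ∈ Y and every γ > 0, the infimum of the augmented Lagrangian equals the negative Moreau envelope of the negative dual function: inf_{(x,s)∈𝒞} [ f(x) − ⟨μ, s⟩ + (γ/2)‖s‖² ] = sup_{λ∈Y} [ −h(λ) − ‖μ − λ‖²/(2γ) ], where h(λ) = sup_{(x,s)∈𝒞} ( ⟨λ, s⟩ − f(x) ). -/
open scoped RealInnerProductSpace
open Filter Asymptotics

noncomputable section

/-- The negative dual function `h(l) = sup_{(x,s) ∈ 𝒞} (⟪l, s⟫ − f x)`. -/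
def negDual {E Y : Type*} [NormedAddCommGroup Y] [InnerProductSpace ℝ Y]
    (f : E → EReal) (CC : Set (E × Y)) (l : Y) : EReal :=
  ⨆ (p : E × Y) (_ : p ∈ CC), ((⟪l, p.2⟫ : ℝ) : EReal) - f p.1

/-- The value function of the shifted problem: `ν(s̃) = inf { f x | (x, s̃) ∈ 𝒞 }`. -/
def valueFn {E Y : Type*} (f : E → EReal) (CC : Set (E × Y)) (st : Y) : EReal :=
  ⨅ (x : E) (_ : (x, st) ∈ CC), f x

theorem sep_aux {Y : Type*} [NormedAddCommGroup Y] [InnerProductSpace ℝ Y] [CompleteSpace Y]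
    (A : Set (Y × ℝ)) (hA : Convex ℝ A) (hne : A.Nonempty) (μ : Y) (γ m : ℝ) (hγ : 0 < γ)
    (h : ∀ q ∈ A, m + ⟪μ, q.1⟫ - γ / 2 * ‖q.1‖ ^ 2 ≤ q.2) :
    ∃ l : Y, ∀ q ∈ A, m + ‖μ - l‖ ^ 2 / (2 * γ) ≤ q.2 - ⟪l, q.1⟫ := by
  set g : Y → ℝ := fun s => m + ⟪μ, s⟫ - γ / 2 * ‖s‖ ^ 2 with hg
  have hgc : Continuous g := by fun_prop
  have hconc : ConcaveOn ℝ Set.univ g := by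
    have h1 : ConvexOn ℝ Set.univ (fun s : Y => ‖s‖ ^ 2) :=
      convexOn_univ_norm.pow (fun _ _ => norm_nonneg _) 2
    have h2 := h1.smul (c := γ / 2) (by positivity)
    have h3 : ConcaveOn ℝ Set.univ (fun s : Y => m + ⟪μ, s⟫) := by
      refine ⟨convex_univ, fun x _ y _ a b _ _ hab => ?_⟩
      simp only [inner_add_right, inner_smul_right, smul_eq_mul]
      apply le_of_eq
      linear_combination m * hab
    exact h3.sub h2
  set B : Set (Y × ℝ) := {q | q.2 < g q.1} with hB
  have hBo : IsOpen B := isOpen_lt continuous_snd (hgc.comp continuous_fst)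
  have hBc : Convex ℝ B := by
    have := hconc.convex_strict_hypograph
    simpa [hB] using this
  have hdisj : Disjoint B A := by
    rw [Set.disjoint_left]
    intro q hq hqA
    exact absurd (h q hqA) (not_le.mpr hq)
  obtain ⟨φ, u, hφB, hφA⟩ := geometric_hahn_banach_open hBc hBo hA hdisj
  have hφ : ∀ s t, φ (s, t) = φ (s, 0) + t * φ (0, 1) := by
    intro s t
    have : ((s, t) : Y × ℝ) = (s, 0) + t • (0, 1) := by simp
    rw [this, map_add, map_smul, smul_eq_mul]
  set c := φ (0, 1) with hc
  set ψ : Y →L[ℝ] ℝ := φ.comp (ContinuousLinearMap.inl ℝ Y ℝ) with hψ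
  set w : Y := (InnerProductSpace.toDual ℝ Y).symm ψ with hw
  have hwi : ∀ s, φ (s, 0) = ⟪w, s⟫ := by
    intro s
    rw [hw, InnerProductSpace.toDual_symm_apply]
    simp [hψ]
  have hc0 : 0 < c := by
    obtain ⟨⟨s, t⟩, hq⟩ := hne
    have h1 := hφA _ hq
    have h2 := hφB (s, min t (g s) - 1) (by
      change min t (g s) - 1 < g s
      linarith [min_le_right t (g s)])
    rw [hφ] at h1 h2
    have h3 := min_le_left t (g s)
    by_contra hcn
    nlinarith
  have hBle : ∀ s, ⟪w, s⟫ + g s * c ≤ u := by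
    intro s
    apply le_of_forall_pos_le_add
    intro ε hε
    have h2 := hφB (s, g s - ε / c) (by
      change g s - ε / c < g s
      have : 0 < ε / c := by positivity
      linarith)
    rw [hφ, hwi, sub_mul, div_mul_cancel₀ _ hc0.ne'] at h2
    linarith
  refine ⟨-(c⁻¹ • w), ?_⟩
  set l : Y := -(c⁻¹ • w) with hl
  have hwl : w = -(c • l) := by
    rw [hl, smul_neg, smul_smul, mul_inv_cancel₀ hc0.ne', one_smul, neg_neg]
  rintro ⟨s, t⟩ hq
  have h1 := hφA _ hq
  rw [hφ, hwi] at h1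
  have h2 := (hBle (γ⁻¹ • (μ - l))).trans h1
  have h4 : g (γ⁻¹ • (μ - l)) - ⟪l, γ⁻¹ • (μ - l)⟫ = m + ‖μ - l‖ ^ 2 / (2 * γ) := by
    have h5 : ⟪μ, μ - l⟫ - ⟪l, μ - l⟫ = ‖μ - l‖ ^ 2 := by
      rw [← inner_sub_left, real_inner_self_eq_norm_sq]
    simp only [hg, norm_smul, inner_smul_right, Real.norm_eq_abs, mul_pow, sq_abs]
    have h6 : ⟪μ, μ - l⟫ = ‖μ - l‖ ^ 2 + ⟪l, μ - l⟫ := by linarith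
    rw [h6]
    field_simp
    ring
  rw [hwl] at h2
  simp only [inner_neg_left, inner_smul_left, conj_trivial] at h2
  rw [← h4]
  refine le_of_mul_le_mul_left ?_ hc0
  change c * (g (γ⁻¹ • (μ - l)) - ⟪l, γ⁻¹ • (μ - l)⟫) ≤ c * (t - ⟪l, s⟫)
  linarith

theorem statement0
    {E Y : Type*}
    [NormedAddCommGroup E] [InnerProductSpace ℝ E] [CompleteSpace E]
    [NormedAddCommGroup Y] [InnerProductSpace ℝ Y] [CompleteSpace Y]
    (X : Set E) (hXne : X.Nonempty) (hXcl : IsClosed X) (hXcv : Convex ℝ X)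
    (K : Set Y) (hKne : K.Nonempty) (hKcl : IsClosed K) (hKcv : Convex ℝ K)
    (f : E → EReal)
    (hf_bot : ∀ x : E, f x ≠ ⊥) (hf_top : ∃ x ∈ X, f x ≠ ⊤)
    (hf_dom : ∀ x : E, x ∉ X → f x = ⊤)
    (hf_lsc : LowerSemicontinuous f)
    (hf_cvx : ∀ x y : E, ∀ a b : ℝ, 0 ≤ a → 0 ≤ b → a + b = 1 →
      f (a • x + b • y) ≤ (a : EReal) * f x + (b : EReal) * f y)
    (C : E → Y) (CC : Set (E × Y))
    (hCC : ∀ (x : E) (sv : Y), (x, sv) ∈ CC ↔ x ∈ X ∧ ∃ yv ∈ K, sv = C x - yv)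
    (hCCne : CC.Nonempty) (hCCcl : IsClosed CC) (hCCcv : Convex ℝ CC)
    (hnu_bot : ∀ sv : Y, valueFn f CC sv ≠ ⊥)
    (hnu_top : ∃ sv : Y, valueFn f CC sv ≠ ⊤)
    (μ : Y) (γ : ℝ) (hγ : 0 < γ) :
    (⨅ (p : E × Y) (_ : p ∈ CC),
        f p.1 - ((⟪μ, p.2⟫ : ℝ) : EReal) + ((γ / 2 * ‖p.2‖ ^ 2 : ℝ) : EReal))
      = ⨆ l : Y, -(negDual f CC l) - ((‖μ - l‖ ^ 2 / (2 * γ) : ℝ) : EReal) := by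
  apply le_antisymm
  · -- strong duality
    set P := (⨅ (p : E × Y) (_ : p ∈ CC),
        f p.1 - ((⟪μ, p.2⟫ : ℝ) : EReal) + ((γ / 2 * ‖p.2‖ ^ 2 : ℝ) : EReal)) with hP
    obtain ⟨s0, hs0⟩ := hnu_top
    obtain ⟨x0, hx0, hfx0⟩ : ∃ x, (x, s0) ∈ CC ∧ f x ≠ ⊤ := by
      by_contra hcon
      push Not at hcon
      exact hs0 (by simpa [valueFn] using hcon)
    have hPle : ∀ p ∈ CC,
        P ≤ f p.1 - ((⟪μ, p.2⟫ : ℝ) : EReal) + ((γ / 2 * ‖p.2‖ ^ 2 : ℝ) : EReal) :=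
      fun p hp => iInf₂_le p hp
    have hPtop : P ≠ ⊤ := by
      have h1 := hPle _ hx0
      lift f x0 to ℝ using ⟨hfx0, hf_bot x0⟩ with r hr
      rw [← EReal.coe_sub, ← EReal.coe_add] at h1
      exact ne_top_of_le_ne_top (EReal.coe_ne_top _) h1
    by_cases hPbot : P = ⊥
    · rw [hPbot]; exact bot_le
    lift P to ℝ using ⟨hPtop, hPbot⟩ with m hm
    let A : Set (Y × ℝ) := {q | ∃ x, (x, q.1) ∈ CC ∧ f x ≤ (q.2 : EReal)}
    have hAc : Convex ℝ A := by
      rintro ⟨s, t⟩ ⟨x, hx, hfx⟩ ⟨s', t'⟩ ⟨x', hx', hfx'⟩ a b ha hb hab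
      refine ⟨a • x + b • x', hCCcv hx hx' ha hb hab, (hf_cvx x x' a b ha hb hab).trans ?_⟩
      have e : (((a • (s, t) + b • (s', t') : Y × ℝ).2 : ℝ) : EReal)
          = (a : EReal) * (t : EReal) + (b : EReal) * (t' : EReal) := by
        simp
      rw [e]
      exact add_le_add (mul_le_mul_of_nonneg_left hfx (EReal.coe_nonneg.mpr ha))
        (mul_le_mul_of_nonneg_left hfx' (EReal.coe_nonneg.mpr hb))
    have hAne : A.Nonempty := by
      exact ⟨(s0, (f x0).toReal), x0, hx0, EReal.le_coe_toReal hfx0⟩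
    obtain ⟨l, hl⟩ := sep_aux A hAc hAne μ γ m hγ (by
      rintro ⟨s, t⟩ ⟨x, hx, hfx⟩
      have h1 := hPle _ hx
      have hft : f x ≠ ⊤ := ne_top_of_le_ne_top (EReal.coe_ne_top _) hfx
      dsimp only at h1 hfx ⊢
      lift f x to ℝ using ⟨hft, hf_bot x⟩ with r hr
      norm_cast at h1 hfx
      linarith)
    refine le_trans ?_ (le_iSup _ l)
    have hh : negDual f CC l ≤ ((-(m + ‖μ - l‖ ^ 2 / (2 * γ)) : ℝ) : EReal) := by
      refine iSup₂_le ?_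
      rintro ⟨x, s⟩ hx
      by_cases hft : f x = ⊤
      · simp [hft]
      have h1 := hl (s, (f x).toReal) ⟨x, hx, EReal.le_coe_toReal hft⟩
      simp only at h1 ⊢
      lift f x to ℝ using ⟨hft, hf_bot x⟩ with r hr
      rw [EReal.toReal_coe] at h1
      rw [← EReal.coe_sub, EReal.coe_le_coe_iff]
      linarith
    have h2 := EReal.sub_le_sub (EReal.neg_le_neg_iff.mpr hh)
      (le_refl ((‖μ - l‖ ^ 2 / (2 * γ) : ℝ) : EReal))
    refine le_trans ?_ h2
    rw [← EReal.coe_neg, ← EReal.coe_sub, EReal.coe_le_coe_iff]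
    linarith
  · -- weak duality
    refine iSup_le fun l => le_iInf₂ ?_
    rintro ⟨x, s⟩ hx
    by_cases hft : f x = ⊤
    · simp only [hft]
      rw [EReal.top_sub_coe, EReal.top_add_coe]
      exact le_top
    have hle : ((⟪l, s⟫ : ℝ) : EReal) - f x ≤ negDual f CC l :=
      le_iSup₂ (f := fun (p : E × Y) (_ : p ∈ CC) => ((⟪l, p.2⟫ : ℝ) : EReal) - f p.1) (x, s) hx
    have h2 := EReal.sub_le_sub (EReal.neg_le_neg_iff.mpr hle)
      (le_refl ((‖μ - l‖ ^ 2 / (2 * γ) : ℝ) : EReal))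
    refine h2.trans ?_
    simp only
    lift f x to ℝ using ⟨hft, hf_bot x⟩ with r hr
    rw [← EReal.coe_sub, ← EReal.coe_neg, ← EReal.coe_sub, ← EReal.coe_sub, ← EReal.coe_add,
      EReal.coe_le_coe_iff]
    have h3 : ⟪μ - l, s⟫ ≤ ‖μ - l‖ * ‖s‖ := real_inner_le_norm _ _
    rw [inner_sub_left] at h3
    have h4 : ‖μ - l‖ * ‖s‖ ≤ ‖μ - l‖ ^ 2 / (2 * γ) + γ / 2 * ‖s‖ ^ 2 := by
      have h5 : ‖μ - l‖ ^ 2 / (2 * γ) + γ / 2 * ‖s‖ ^ 2 - ‖μ - l‖ * ‖s‖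
          = (‖μ - l‖ - γ * ‖s‖) ^ 2 / (2 * γ) := by
        field_simp
        ring
      have h6 : 0 ≤ (‖μ - l‖ - γ * ‖s‖) ^ 2 / (2 * γ) := by positivity
      linarith
    linarith
end
end

section
/- For an IALM sequence whose errors and penalty parameters satisfy (A1)–(A5), if the constraint-violation sequence (s^k)_{k∈ℕ} is bounded, then the primal objective values track the conjugate-dual values at the exact proximal subgradients: |f(x^{k+1}) − h*(s⋆^{k+1})| = O(1/√(∑_{i=0}^{k} γ_i)), where s⋆^{k+1} = (λ^k − prox_{γ_k h}(λ^k))/γ_k and h* is the Fenchel conjugate of the negative dual function h. -/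
open scoped RealInnerProductSpace
open Filter Asymptotics

noncomputable section

/-- The Fenchel conjugate of an `EReal`-valued function on a real inner product space. -/
def fenchel {Y : Type*} [NormedAddCommGroup Y] [InnerProductSpace ℝ Y]
    (h : Y → EReal) (s : Y) : EReal :=
  ⨆ l : Y, ((⟪s, l⟫ : ℝ) : EReal) - h l

/-- Real epigraph of the value function (before taking the infimum). -/
def epiS {E Y : Type*} (f : E → EReal) (CC : Set (E × Y)) : Set (Y × ℝ) :=
  {q | ∃ x, (x, q.1) ∈ CC ∧ f x ≤ (q.2 : EReal)}

theorem epiS_convex {E Y : Type*} [NormedAddCommGroup E] [InnerProductSpace ℝ E]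
    [NormedAddCommGroup Y] [InnerProductSpace ℝ Y]
    (f : E → EReal) (CC : Set (E × Y)) (hf_bot : ∀ x : E, f x ≠ ⊥)
    (hf_cvx : ∀ x y : E, ∀ a b : ℝ, 0 ≤ a → 0 ≤ b → a + b = 1 →
      f (a • x + b • y) ≤ (a : EReal) * f x + (b : EReal) * f y)
    (hCCcv : Convex ℝ CC) : Convex ℝ (epiS f CC) := by
  rintro ⟨s, v⟩ ⟨x, hx, hxv⟩ ⟨t, w⟩ ⟨y, hy, hyw⟩ a b ha hb hab
  refine ⟨a • x + b • y, ?_, ?_⟩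
  · have := hCCcv hx hy ha hb hab
    simpa using this
  · refine (hf_cvx x y a b ha hb hab).trans ?_
    have hx1 : f x ≠ ⊤ := fun h => by simp [h] at hxv
    have hy1 : f y ≠ ⊤ := fun h => by simp [h] at hyw
    lift f x to ℝ using ⟨hx1, hf_bot x⟩ with p hp
    lift f y to ℝ using ⟨hy1, hf_bot y⟩ with q hq
    have h1 : p ≤ v := by exact_mod_cast hxv
    have h2 : q ≤ w := by exact_mod_cast hyw
    have : a * p + b * q ≤ a * v + b * w := by gcongr
    simp only [Prod.smul_mk, Prod.mk_add_mk, smul_eq_mul]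
    exact_mod_cast this

theorem negDual_le_iff {E Y : Type*} [NormedAddCommGroup Y] [InnerProductSpace ℝ Y]
    (f : E → EReal) (CC : Set (E × Y)) (hf_bot : ∀ x : E, f x ≠ ⊥) (l : Y) (c : ℝ) :
    negDual f CC l ≤ (c : EReal) ↔ ∀ q ∈ epiS f CC, ⟪l, q.1⟫ - q.2 ≤ c := by
  unfold negDual
  simp only [iSup_le_iff]
  constructor
  · rintro h ⟨s, v⟩ ⟨x, hx, hxv⟩
    have h0 := h (x, s) hx
    have hx1 : f x ≠ ⊤ := fun h => by simp [h] at hxv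
    simp only at h0 hxv
    lift f x to ℝ using ⟨hx1, hf_bot x⟩ with p hp
    have h1 : p ≤ v := by exact_mod_cast hxv
    have h2 : ⟪l, s⟫ - p ≤ c := by exact_mod_cast h0
    try simp only
    linarith
  · rintro h ⟨x, s⟩ hx
    simp only
    by_cases hx1 : f x = ⊤
    · simp [hx1]
    · have h3 := h (s, (f x).toReal) ⟨x, hx, by rw [EReal.coe_toReal hx1 (hf_bot x)]⟩
      rw [← EReal.coe_toReal hx1 (hf_bot x)]
      exact_mod_cast h3

/-- If `a ≤ b + t * c` for all small `t`, then `a ≤ b`. -/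
theorem le_of_small {a b c : ℝ} (h : ∀ t : ℝ, 0 < t → t < 1 → a ≤ b + t * c) : a ≤ b := by
  have h1 : Tendsto (fun t : ℝ => b + t * c) (nhdsWithin 0 (Set.Ioi 0)) (nhds (b + 0 * c)) := by
    apply Tendsto.mono_left _ nhdsWithin_le_nhds
    exact (Continuous.tendsto (by fun_prop) 0)
  have h2 := ge_of_tendsto h1 (b := a) (by
    filter_upwards [Ioo_mem_nhdsGT (show (0:ℝ) < 1 by norm_num)] with t ht
    exact h t ht.1 ht.2)
  linarith

theorem AL_comb {Y : Type*} [NormedAddCommGroup Y] [InnerProductSpace ℝ Y]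
    (l s r : Y) (g t v w : ℝ) :
    ((1 - t) * v + t * w) - ⟪l, (1 - t) • s + t • r⟫
      + g / 2 * ‖(1 - t) • s + t • r‖ ^ 2
    = (1 - t) * (v - ⟪l, s⟫ + g / 2 * ‖s‖ ^ 2) + t * (w - ⟪l, r⟫ + g / 2 * ‖r‖ ^ 2)
      - g / 2 * (t * (1 - t)) * ‖r - s‖ ^ 2 := by
  simp only [← real_inner_self_eq_norm_sq, inner_add_left, inner_add_right, inner_sub_left,
    inner_sub_right, real_inner_smul_left, real_inner_smul_right]
  rw [real_inner_comm r s]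
  ring

theorem strong_dual {Y : Type*} [NormedAddCommGroup Y] [InnerProductSpace ℝ Y] [CompleteSpace Y]
    (S : Set (Y × ℝ)) (hS : Convex ℝ S) (l : Y) (g m : ℝ) (hg : 0 < g)
    (hlb : ∀ q ∈ S, m ≤ q.2 - ⟪l, q.1⟫ + g / 2 * ‖q.1‖ ^ 2)
    (hap : ∀ δ > 0, ∃ q ∈ S, q.2 - ⟪l, q.1⟫ + g / 2 * ‖q.1‖ ^ 2 < m + δ) :
    ∃ sb : Y, ∀ q ∈ S, m + ⟪l - g • sb, q.1⟫ + g / 2 * ‖sb‖ ^ 2 ≤ q.2 := by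
  have key : ∀ p ∈ S, ∀ q ∈ S, ∀ t : ℝ, 0 < t → t < 1 →
      m ≤ (1 - t) * (p.2 - ⟪l, p.1⟫ + g / 2 * ‖p.1‖ ^ 2)
        + t * (q.2 - ⟪l, q.1⟫ + g / 2 * ‖q.1‖ ^ 2)
      - g / 2 * (t * (1 - t)) * ‖q.1 - p.1‖ ^ 2 := by
    intro p hp q hq t ht ht1
    have h1 := hlb _ (hS hp hq (by linarith : (0:ℝ) ≤ 1 - t) ht.le (by ring))
    rw [← AL_comb]
    simpa using h1
  choose p hpS hp using fun n : ℕ => hap (1 / ((n : ℝ) + 1)) (by positivity)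
  have hdist : ∀ i j : ℕ, ‖(p j).1 - (p i).1‖ ^ 2
      ≤ 4 / g * (1 / ((i : ℝ) + 1) + 1 / ((j : ℝ) + 1)) := by
    intro i j
    have h1 := key _ (hpS i) _ (hpS j) (1/2) (by norm_num) (by norm_num)
    have h2 := hp i
    have h3 := hp j
    rw [div_mul_eq_mul_div, le_div_iff₀ hg]
    nlinarith
  have hcau : CauchySeq (fun n => (p n).1) := by
    rw [Metric.cauchySeq_iff']
    intro e he
    obtain ⟨N, hN⟩ := exists_nat_one_div_lt (show 0 < g / 8 * e ^ 2 by positivity)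
    refine ⟨N, fun n hn => ?_⟩
    have h1 := hdist N n
    have h2 : 1 / ((n : ℝ) + 1) ≤ 1 / ((N : ℝ) + 1) := by gcongr
    rw [dist_eq_norm]
    have h3 : ‖(p n).1 - (p N).1‖ ^ 2 < e ^ 2 := by
      calc _ ≤ _ := h1
        _ < 4 / g * (g / 8 * e ^ 2 + g / 8 * e ^ 2) := by gcongr; linarith
        _ = e ^ 2 := by field_simp; ring
    exact lt_of_pow_lt_pow_left₀ 2 he.le h3
  obtain ⟨sb, hsb⟩ := cauchySeq_tendsto_of_complete hcau
  refine ⟨sb, fun q hq => ?_⟩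
  set A := q.2 - ⟪l, q.1⟫ + g / 2 * ‖q.1‖ ^ 2 with hA
  have lim : ∀ t : ℝ, 0 < t → t < 1 →
      m ≤ (1 - t) * (m + 0) + t * A - g / 2 * (t * (1 - t)) * ‖q.1 - sb‖ ^ 2 := by
    intro t ht ht1
    have hT : Tendsto (fun n : ℕ => (1 - t) * (m + 1 / ((n : ℝ) + 1)) + t * A
        - g / 2 * (t * (1 - t)) * ‖q.1 - (p n).1‖ ^ 2) atTop
        (nhds ((1 - t) * (m + 0) + t * A - g / 2 * (t * (1 - t)) * ‖q.1 - sb‖ ^ 2)) := by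
      refine Tendsto.sub ((((tendsto_const_nhds.add
        tendsto_one_div_add_atTop_nhds_zero_nat)).const_mul _).add tendsto_const_nhds) ?_
      exact (((tendsto_const_nhds.sub hsb).norm).pow 2).const_mul _
    refine ge_of_tendsto' hT fun n => ?_
    have h1 := key _ (hpS n) q hq t ht ht1
    have h2 := hp n
    have h3 : (0:ℝ) < 1 - t := by linarith
    have h4 := mul_le_mul_of_nonneg_left h2.le h3.le
    rw [← hA] at h1
    linarith
  have h5 : m + g / 2 * ‖q.1 - sb‖ ^ 2 ≤ A := by
    apply le_of_small (c := g / 2 * ‖q.1 - sb‖ ^ 2)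
    intro t ht ht1
    have h6 := lim t ht ht1
    have h7 : t * (m + g / 2 * ‖q.1 - sb‖ ^ 2)
      ≤ t * (A + t * (g / 2 * ‖q.1 - sb‖ ^ 2)) := by linarith
    exact le_of_mul_le_mul_left h7 ht
  rw [hA, norm_sub_sq_real] at h5
  rw [inner_sub_left, real_inner_smul_left, ← real_inner_comm sb q.1]
  linarith [real_inner_comm sb q.1]

/-- The one-step estimate. -/
theorem one_step {E Y : Type*}
    [NormedAddCommGroup E] [InnerProductSpace ℝ E]
    [NormedAddCommGroup Y] [InnerProductSpace ℝ Y] [CompleteSpace Y]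
    (f : E → EReal) (CC : Set (E × Y)) (hf_bot : ∀ x : E, f x ≠ ⊥)
    (hS : Convex ℝ (epiS f CC)) (hne : (epiS f CC).Nonempty)
    (g e : ℝ) (hg : 0 < g) (he : 0 ≤ e) (x : E) (s l ls sst : Y) (hx : (x, s) ∈ CC)
    (hopt : f x - ((⟪l, s⟫ : ℝ) : EReal) + ((g / 2 * ‖s‖ ^ 2 : ℝ) : EReal)
        ≤ (⨅ (p : E × Y) (_ : p ∈ CC),
              f p.1 - ((⟪l, p.2⟫ : ℝ) : EReal) + ((g / 2 * ‖p.2‖ ^ 2 : ℝ) : EReal))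
          + ((e ^ 2 / (2 * g) : ℝ) : EReal))
    (hmin : ∀ (μ : Y),
      negDual f CC ls + ((‖l - ls‖ ^ 2 / (2 * g) : ℝ) : EReal)
        ≤ negDual f CC μ + ((‖l - μ‖ ^ 2 / (2 * g) : ℝ) : EReal))
    (hs : sst = g⁻¹ • (l - ls)) :
    ∃ v w : ℝ, f x = v ∧ fenchel (negDual f CC) sst = w ∧
      |v - w| ≤ ‖l - g • s‖ * (e / g) + e ^ 2 / g := by
  have hb : ∀ q ∈ epiS f CC, f x - ((⟪l, s⟫ : ℝ) : EReal) + ((g / 2 * ‖s‖ ^ 2 : ℝ) : EReal)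
      ≤ ((q.2 - ⟪l, q.1⟫ + g / 2 * ‖q.1‖ ^ 2 + e ^ 2 / (2 * g) : ℝ) : EReal) := by
    rintro ⟨r, w⟩ ⟨y, hy, hyw⟩
    refine hopt.trans ?_
    rw [EReal.coe_add]
    gcongr
    refine (iInf₂_le (y, r) hy).trans ?_
    push_cast
    try simp only
    gcongr
    exact EReal.sub_le_sub hyw le_rfl
  have hxt : f x ≠ ⊤ := by
    intro h
    obtain ⟨q, hq⟩ := hne
    have := hb q hq
    rw [h, EReal.top_sub_coe, EReal.top_add_coe] at this
    exact EReal.coe_ne_top _ (top_le_iff.mp this)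
  obtain ⟨v, hv⟩ : ∃ v : ℝ, f x = v := ⟨_, (EReal.coe_toReal hxt (hf_bot x)).symm⟩
  have hxS : (s, v) ∈ epiS f CC := ⟨x, hx, hv.le⟩
  have hb' : ∀ q ∈ epiS f CC, v - ⟪l, s⟫ + g / 2 * ‖s‖ ^ 2
      ≤ q.2 - ⟪l, q.1⟫ + g / 2 * ‖q.1‖ ^ 2 + e ^ 2 / (2 * g) := by
    intro q hq
    have := hb q hq
    rw [hv] at this
    exact_mod_cast this
  -- the infimum
  set T : Set ℝ := (fun q : Y × ℝ => q.2 - ⟪l, q.1⟫ + g / 2 * ‖q.1‖ ^ 2) '' epiS f CC with hT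
  have hTne : T.Nonempty := hne.image _
  have hTb : v - ⟪l, s⟫ + g / 2 * ‖s‖ ^ 2 - e ^ 2 / (2 * g) ∈ lowerBounds T := by
    rintro _ ⟨q, hq, rfl⟩
    have := hb' q hq
    simp only
    linarith
  obtain ⟨sb, hsb⟩ := strong_dual (epiS f CC) hS l g (sInf T) hg
    (fun q hq => csInf_le ⟨_, hTb⟩ ⟨q, hq, rfl⟩)
    (fun δ hδ => by
      obtain ⟨_, ⟨q, hq, rfl⟩, h⟩ := exists_lt_of_csInf_lt hTne (show sInf T < sInf T + δ by linarith)
      exact ⟨q, hq, h⟩)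
  have hmA : v - ⟪l, s⟫ + g / 2 * ‖s‖ ^ 2 - e ^ 2 / (2 * g) ≤ sInf T := le_csInf hTne hTb
  have hnb : ∀ μ, negDual f CC μ ≠ ⊥ := by
    intro μ h
    have := (negDual_le_iff f CC hf_bot μ (⟪μ, s⟫ - v - 1)).1 (by rw [h]; exact bot_le) _ hxS
    simp only at this
    linarith
  have hsb' : negDual f CC (l - g • sb) ≤ ((- sInf T - g / 2 * ‖sb‖ ^ 2 : ℝ) : EReal) := by
    rw [negDual_le_iff f CC hf_bot]
    intro q hq
    have := hsb q hq
    linarith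
  have hmin1 : negDual f CC ls + ((‖l - ls‖ ^ 2 / (2 * g) : ℝ) : EReal)
      ≤ ((- sInf T : ℝ) : EReal) := by
    refine (hmin (l - g • sb)).trans ((add_le_add_left hsb' _).trans ?_)
    rw [← EReal.coe_add, EReal.coe_le_coe_iff]
    rw [sub_sub_cancel, norm_smul, Real.norm_of_nonneg hg.le]
    apply le_of_eq
    field_simp
    ring
  have hht : negDual f CC ls ≠ ⊤ := by
    intro h
    rw [h, EReal.top_add_coe] at hmin1
    exact EReal.coe_ne_top _ (top_le_iff.mp hmin1)
  obtain ⟨H, hH⟩ : ∃ H : ℝ, negDual f CC ls = H := ⟨_, (EReal.coe_toReal hht (hnb ls)).symm⟩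
  have F1 : ∀ q ∈ epiS f CC, ⟪ls, q.1⟫ - q.2 ≤ H := (negDual_le_iff f CC hf_bot ls H).1 hH.le
  have F2 : H + ‖l - ls‖ ^ 2 / (2 * g) ≤ - sInf T := by
    rw [hH] at hmin1
    exact_mod_cast hmin1
  have hlls : l - ls = g • sst := by rw [hs, smul_inv_smul₀ hg.ne']
  have hls : ls = l - g • sst := by rw [← hlls]; abel
  -- subgradient property
  have F3 : ∀ (μ : Y) (c : ℝ), negDual f CC μ = c → ⟪sst, μ⟫ - c ≤ ⟪sst, ls⟫ - H := by
    intro μ c hc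
    have hcS := (negDual_le_iff f CC hf_bot μ c).1 hc.le
    have h1 : H + ⟪sst, μ - ls⟫ ≤ c := by
      apply le_of_small (c := ‖μ - ls‖ ^ 2 / (2 * g))
      intro t ht ht1
      have h2 : negDual f CC (ls + t • (μ - ls)) ≤ (((1 - t) * H + t * c : ℝ) : EReal) := by
        rw [negDual_le_iff f CC hf_bot]
        intro q hq
        have a1 := mul_le_mul_of_nonneg_left (F1 q hq) (by linarith : (0:ℝ) ≤ 1 - t)
        have a2 := mul_le_mul_of_nonneg_left (hcS q hq) ht.le
        rw [inner_add_left, real_inner_smul_left, inner_sub_left]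
        linarith
      have h3 := (hmin (ls + t • (μ - ls))).trans (add_le_add_left h2 _)
      rw [hH, ← EReal.coe_add, ← EReal.coe_add, EReal.coe_le_coe_iff] at h3
      have h4 : ‖l - (ls + t • (μ - ls))‖ ^ 2
          = ‖l - ls‖ ^ 2 - 2 * (t * (g * ⟪sst, μ - ls⟫)) + t ^ 2 * ‖μ - ls‖ ^ 2 := by
        rw [← sub_sub, norm_sub_sq_real, real_inner_smul_right, norm_smul, mul_pow,
          Real.norm_of_nonneg ht.le]
        congr 3
        rw [hlls, real_inner_smul_left]
      rw [h4] at h3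
      have h5 : t * (H + ⟪sst, μ - ls⟫) ≤ t * (c + t * (‖μ - ls‖ ^ 2 / (2 * g))) := by
        have : (‖l - ls‖ ^ 2 - 2 * (t * (g * ⟪sst, μ - ls⟫)) + t ^ 2 * ‖μ - ls‖ ^ 2) / (2 * g)
          = ‖l - ls‖ ^ 2 / (2 * g) - t * ⟪sst, μ - ls⟫ + t * (t * (‖μ - ls‖ ^ 2 / (2 * g))) := by
          field_simp
        rw [this] at h3
        linarith
      exact le_of_mul_le_mul_left h5 ht
    rw [inner_sub_right] at h1
    linarith
  have F4 : fenchel (negDual f CC) sst = ((⟪sst, ls⟫ - H : ℝ) : EReal) := by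
    apply le_antisymm
    · refine iSup_le fun μ => ?_
      by_cases ht : negDual f CC μ = ⊤
      · simp [ht]
      · have h1 := F3 μ _ (EReal.coe_toReal ht (hnb μ)).symm
        rw [← EReal.coe_toReal ht (hnb μ)]
        exact_mod_cast h1
    · refine le_trans ?_ (le_iSup _ ls)
      rw [hH]
      push_cast
      exact le_rfl
  refine ⟨v, _, hv, F4, ?_⟩
  -- final real estimates
  have G1 := F1 _ hxS
  simp only at G1
  set d := s - sst with hd
  have hn1 : ‖l - ls‖ ^ 2 / (2 * g) = g / 2 * ‖sst‖ ^ 2 := by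
    rw [hlls, norm_smul, Real.norm_of_nonneg hg.le]
    field_simp
  rw [hn1] at F2
  have hsst : sst = s - d := by rw [hd]; abel
  have hns : ‖sst‖ ^ 2 = ‖s‖ ^ 2 - 2 * ⟪s, d⟫ + ‖d‖ ^ 2 := by rw [hsst, norm_sub_sq_real]
  have hi1 : ⟪ls, s⟫ = ⟪l, s⟫ - g * ‖s‖ ^ 2 + g * ⟪s, d⟫ := by
    rw [hls, hsst, inner_sub_left, real_inner_smul_left, inner_sub_left,
      real_inner_self_eq_norm_sq, real_inner_comm s d]
    ring
  have hi2 : ⟪sst, ls⟫ = ⟪ls, s⟫ - ⟪l, d⟫ + g * ⟪s, d⟫ - g * ‖d‖ ^ 2 := by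
    have : ⟪sst, ls⟫ = ⟪ls, s⟫ - ⟪ls, d⟫ := by rw [hsst, real_inner_comm, inner_sub_right]
    rw [this, hls, hsst, inner_sub_left l _ d, real_inner_smul_left, inner_sub_left s d d,
      real_inner_self_eq_norm_sq]
    ring
  have hi3 : ⟪l - g • s, d⟫ = ⟪l, d⟫ - g * ⟪s, d⟫ := by
    rw [inner_sub_left, real_inner_smul_left]
  have hd2 : g / 2 * ‖d‖ ^ 2 ≤ e ^ 2 / (2 * g) := by
    rw [hns] at F2
    linarith
  have hd3 : ‖d‖ ^ 2 ≤ (e / g) ^ 2 := by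
    have : g / 2 * ‖d‖ ^ 2 ≤ g / 2 * (e / g) ^ 2 := by
      refine hd2.trans (le_of_eq ?_)
      field_simp
    exact le_of_mul_le_mul_left this (by positivity)
  have hd4 : ‖d‖ ≤ e / g := le_of_sq_le_sq hd3 (by positivity)
  have hcs := (abs_real_inner_le_norm (l - g • s) d).trans
    (mul_le_mul_of_nonneg_left hd4 (norm_nonneg (l - g • s)))
  rw [hi3, abs_le] at hcs
  have he1 : e ^ 2 / (2 * g) = (e ^ 2 / g) / 2 := by field_simp
  have hg2 : 0 ≤ g / 2 * ‖d‖ ^ 2 := by positivity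
  rw [abs_le]
  rw [he1] at hd2 hmA
  rw [hns] at F2
  constructor <;> linarith [hcs.1, hcs.2]

theorem statement3
    {E Y : Type*}
    [NormedAddCommGroup E] [InnerProductSpace ℝ E] [CompleteSpace E]
    [NormedAddCommGroup Y] [InnerProductSpace ℝ Y] [CompleteSpace Y]
    (X : Set E) (hXne : X.Nonempty) (hXcl : IsClosed X) (hXcv : Convex ℝ X)
    (K : Set Y) (hKne : K.Nonempty) (hKcl : IsClosed K) (hKcv : Convex ℝ K)
    (f : E → EReal)
    (hf_bot : ∀ x : E, f x ≠ ⊥) (hf_top : ∃ x ∈ X, f x ≠ ⊤)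
    (hf_dom : ∀ x : E, x ∉ X → f x = ⊤)
    (hf_lsc : LowerSemicontinuous f)
    (hf_cvx : ∀ x y : E, ∀ a b : ℝ, 0 ≤ a → 0 ≤ b → a + b = 1 →
      f (a • x + b • y) ≤ (a : EReal) * f x + (b : EReal) * f y)
    (C : E → Y) (CC : Set (E × Y))
    (hCC : ∀ (x : E) (sv : Y), (x, sv) ∈ CC ↔ x ∈ X ∧ ∃ yv ∈ K, sv = C x - yv)
    (hCCne : CC.Nonempty) (hCCcl : IsClosed CC) (hCCcv : Convex ℝ CC)
    (hnu_bot : ∀ sv : Y, valueFn f CC sv ≠ ⊥)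
    (γ : ℕ → ℝ) (hγ : ∀ k : ℕ, 0 < γ k) (ε : ℕ → ℝ) (hε : ∀ k : ℕ, 0 ≤ ε k)
    (xs : ℕ → E) (ys : ℕ → Y) (ss : ℕ → Y) (lam : ℕ → Y)
    (hxs : ∀ k : ℕ, xs (k+1) ∈ X) (hys : ∀ k : ℕ, ys (k+1) ∈ K)
    (hss : ∀ k : ℕ, ss (k+1) = C (xs (k+1)) - ys (k+1))
    (hopt : ∀ k : ℕ,
      f (xs (k+1)) - ((⟪lam k, ss (k+1)⟫ : ℝ) : EReal)
          + ((γ k / 2 * ‖ss (k+1)‖ ^ 2 : ℝ) : EReal)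
        ≤ (⨅ (p : E × Y) (_ : p ∈ CC),
              f p.1 - ((⟪lam k, p.2⟫ : ℝ) : EReal)
                + ((γ k / 2 * ‖p.2‖ ^ 2 : ℝ) : EReal))
          + ((ε (k+1) ^ 2 / (2 * γ k) : ℝ) : EReal))
    (hlam : ∀ k : ℕ, lam (k+1) = lam k - γ k • ss (k+1))
    (A1 : Summable ε)
    (A2 : (fun k : ℕ => ε (k+1) / γ k * ∑ i ∈ Finset.range (k+1), γ i)
        =O[atTop] fun k : ℕ => 1 / Real.sqrt (∑ i ∈ Finset.range (k+1), γ i))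
    (A3 : Summable fun k : ℕ => (ε (k+1) / γ (k+1)) ^ 2 * ∑ i ∈ Finset.range (k+1), γ i)
    (A4 : Summable fun k : ℕ => ε (k+1) / γ (k+1) * ∑ i ∈ Finset.range (k+1), γ i)
    (A5 : Tendsto (fun n : ℕ => ∑ i ∈ Finset.range n, γ i) atTop atTop)
    (lamstar : ℕ → Y)
    (hmin : ∀ (k : ℕ) (μ : Y),
      negDual f CC (lamstar (k+1))
          + ((‖lam k - lamstar (k+1)‖ ^ 2 / (2 * γ k) : ℝ) : EReal)
        ≤ negDual f CC μ + ((‖lam k - μ‖ ^ 2 / (2 * γ k) : ℝ) : EReal))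
    (sstar : ℕ → Y) (hsstar : ∀ k : ℕ, sstar (k+1) = (γ k)⁻¹ • (lam k - lamstar (k+1)))
    (hbdd : ∃ M : ℝ, ∀ k : ℕ, ‖ss (k+1)‖ ≤ M) :
    ∃ M : ℝ, ∀ᶠ k in atTop,
      f (xs (k+1)) ≤ fenchel (negDual f CC) (sstar (k+1))
          + ((M / Real.sqrt (∑ i ∈ Finset.range (k+1), γ i) : ℝ) : EReal) ∧
      fenchel (negDual f CC) (sstar (k+1)) ≤ f (xs (k+1))
          + ((M / Real.sqrt (∑ i ∈ Finset.range (k+1), γ i) : ℝ) : EReal) := by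
  have hSc := epiS_convex f CC hf_bot hf_cvx hCCcv
  have hSne : (epiS f CC).Nonempty := by
    obtain ⟨x, hx, hxt⟩ := hf_top
    obtain ⟨y, hy⟩ := hKne
    exact ⟨(C x - y, (f x).toReal), x, (hCC _ _).2 ⟨hx, y, hy, rfl⟩,
      (EReal.coe_toReal hxt (hf_bot x)).ge⟩
  have hstep := fun k => one_step f CC hf_bot hSc hSne (γ k) (ε (k+1)) (hγ k) (hε _)
    (xs (k+1)) (ss (k+1)) (lam k) (lamstar (k+1)) (sstar (k+1))
    ((hCC _ _).2 ⟨hxs k, ys (k+1), hys k, hss k⟩) (hopt k) (hmin k) (hsstar k)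
  obtain ⟨M, hM⟩ := hbdd
  have hM0 : 0 ≤ M := (norm_nonneg _).trans (hM 0)
  have hlb : ∀ k, ‖lam k‖ ≤ ‖lam 0‖ + M * ∑ i ∈ Finset.range k, γ i := by
    intro k
    induction k with
    | zero => simp
    | succ k ih =>
      rw [hlam, Finset.sum_range_succ]
      have h1 := norm_sub_le (lam k) (γ k • ss (k+1))
      rw [norm_smul, Real.norm_of_nonneg (hγ k).le] at h1
      have h2 := mul_le_mul_of_nonneg_left (hM k) (hγ k).le
      linarith
  obtain ⟨c, hc⟩ := A2.bound
  refine ⟨(‖lam 0‖ + M + 1) * c, ?_⟩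
  have hG := (tendsto_add_atTop_iff_nat 1).2 A5
  have hE := (tendsto_add_atTop_iff_nat 1).2 A1.tendsto_atTop_zero
  filter_upwards [hc, hG.eventually_ge_atTop 1, hE.eventually_le_const one_pos] with k h1 h2 h3
  obtain ⟨v, w, hv, hw, hvw⟩ := hstep k
  rw [hv, hw]
  rw [← hlam] at hvw
  have h4 := hlb (k+1)
  set G := ∑ i ∈ Finset.range (k+1), γ i with hGdef
  have hr : 0 ≤ ε (k+1) / γ k := div_nonneg (hε _) (hγ k).le
  have hG0 : 0 < G := by linarith
  rw [Real.norm_of_nonneg (mul_nonneg hr hG0.le), Real.norm_of_nonneg (by positivity)] at h1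
  have h5 : ‖lam (k+1)‖ ≤ (‖lam 0‖ + M) * G := by
    nlinarith [norm_nonneg (lam 0)]
  have h6 : ε (k+1) ^ 2 / γ k ≤ ε (k+1) / γ k * G := by
    rw [pow_two, mul_div_assoc, mul_comm]
    exact mul_le_mul_of_nonneg_left (h3.trans h2) hr
  have h7 : |v - w| ≤ (‖lam 0‖ + M + 1) * c / Real.sqrt G := by
    have h8 := mul_le_mul_of_nonneg_right h5 hr
    have h9 := mul_le_mul_of_nonneg_left h1 (show 0 ≤ ‖lam 0‖ + M + 1 by positivity)
    calc _ ≤ _ := hvw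
      _ ≤ (‖lam 0‖ + M + 1) * (ε (k+1) / γ k * G) := by linarith
      _ ≤ _ := h9
      _ = _ := by ring
  rw [abs_le] at h7
  rw [← EReal.coe_add, ← EReal.coe_add, EReal.coe_le_coe_iff, EReal.coe_le_coe_iff]
  constructor <;> linarith [h7.1, h7.2]
end
end

section
/- For an IPPA sequence on a proper, convex, lower semicontinuous function h with errors and step sizes satisfying (A1)–(A5), the subgradient sequences (s⋆^k)_{k≥1} and (s^k)_{k≥1} are bounded in norm. -/
open scoped RealInnerProductSpace
open Filter Asymptotics

noncomputable section

/-- The convex subdifferential of an `EReal`-valued function: `v ∈ ∂h(u)` iff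
`h w ≥ h u + ⟪v, w − u⟫` for all `w`. -/
def subdiff {Y : Type*} [NormedAddCommGroup Y] [InnerProductSpace ℝ Y]
    (h : Y → EReal) (u : Y) : Set Y :=
  {v : Y | ∀ w : Y, h u + ((⟪v, w - u⟫ : ℝ) : EReal) ≤ h w}

theorem prox_finite {Y : Type*} [NormedAddCommGroup Y] [InnerProductSpace ℝ Y]
    (h : Y → EReal) (hh_top : ∃ u : Y, h u ≠ ⊤) (x p : Y) (γ : ℝ)
    (hmin : ∀ μ : Y, h p + ((‖x - p‖ ^ 2 / (2 * γ) : ℝ) : EReal)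
        ≤ h μ + ((‖x - μ‖ ^ 2 / (2 * γ) : ℝ) : EReal)) : h p ≠ ⊤ := by
  obtain ⟨u, hu⟩ := hh_top
  intro hp
  have h1 := hmin u
  rw [hp, EReal.top_add_coe, top_le_iff] at h1
  exact (EReal.add_ne_top hu (EReal.coe_ne_top _)) h1

theorem prox_subgrad {Y : Type*} [NormedAddCommGroup Y] [InnerProductSpace ℝ Y]
    (h : Y → EReal)
    (hh_cvx : ∀ u v : Y, ∀ a b : ℝ, 0 ≤ a → 0 ≤ b → a + b = 1 →
      h (a • u + b • v) ≤ (a : EReal) * h u + (b : EReal) * h v)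
    (x p q : Y) (γ P Q : ℝ) (hγ : 0 < γ) (hP : h p = (P : EReal)) (hQ : h q = (Q : EReal))
    (hmin : ∀ μ : Y, h p + ((‖x - p‖ ^ 2 / (2 * γ) : ℝ) : EReal)
        ≤ h μ + ((‖x - μ‖ ^ 2 / (2 * γ) : ℝ) : EReal)) :
    P + γ⁻¹ * ⟪x - p, q - p⟫ ≤ Q := by
  have key : ∀ t : ℝ, 0 < t → t ≤ 1 →
      P + γ⁻¹ * ⟪x - p, q - p⟫ - Q ≤ t * (‖q - p‖ ^ 2 / (2 * γ)) := by
    intro t ht ht1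
    have h1 := hmin ((1 - t) • p + t • q)
    have h2 := hh_cvx p q (1 - t) t (by linarith) ht.le (by ring)
    have h3 := h1.trans (add_le_add_left h2 _)
    rw [hP, hQ] at h3
    norm_cast at h3
    have e : x - ((1 - t) • p + t • q) = (x - p) - t • (q - p) := by module
    rw [e, norm_sub_sq_real (x - p) (t • (q - p)), norm_smul, inner_smul_right, mul_pow, Real.norm_eq_abs, sq_abs] at h3
    have h4 : t * (P + γ⁻¹ * ⟪x - p, q - p⟫ - Q) ≤ t * (t * (‖q - p‖ ^ 2 / (2 * γ))) := by
      have e2 : (‖x - p‖ ^ 2 - 2 * (t * ⟪x - p, q - p⟫) + t ^ 2 * ‖q - p‖ ^ 2) / (2 * γ)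
          = ‖x - p‖ ^ 2 / (2 * γ) - t * (γ⁻¹ * ⟪x - p, q - p⟫)
            + t * (t * (‖q - p‖ ^ 2 / (2 * γ))) := by
        field_simp
      rw [e2] at h3
      linarith
    exact le_of_mul_le_mul_left h4 ht
  by_contra hcon
  push Not at hcon
  set A := P + γ⁻¹ * ⟪x - p, q - p⟫ - Q with hA
  set C := ‖q - p‖ ^ 2 / (2 * γ) with hC
  have hApos : 0 < A := by linarith
  have hC0 : 0 ≤ C := by positivity
  have hD : 0 < A + C := by linarith
  have h5 := key (A / (2 * (A + C))) (by positivity)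
    (by rw [div_le_one (by positivity)]; linarith)
  rw [div_mul_eq_mul_div, le_div_iff₀ (by positivity)] at h5
  nlinarith

theorem ball_norm_le {Y : Type*} [NormedAddCommGroup Y] [InnerProductSpace ℝ Y]
    (a b d : Y) (H : ⟪a - b, a - d⟫ ≤ (0 : ℝ)) : ‖a‖ ≤ ‖b‖ + ‖d‖ := by
  have h1 : ⟪a - b, a - d⟫ = ‖a‖ ^ 2 - ⟪a, d⟫ - ⟪b, a⟫ + ⟪b, d⟫ := by
    simp only [inner_sub_left, inner_sub_right, real_inner_self_eq_norm_sq]; ring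
  have h2 := real_inner_le_norm a d
  have h3 := real_inner_le_norm b a
  have h4 := neg_le_of_abs_le (abs_real_inner_le_norm b d)
  have na := norm_nonneg a
  have nb := norm_nonneg b
  have nd := norm_nonneg d
  have e : ‖(2:ℝ) • a - (b + d)‖ ^ 2 ≤ ‖b - d‖ ^ 2 := by
    rw [← real_inner_self_eq_norm_sq, ← real_inner_self_eq_norm_sq]
    simp only [inner_sub_left, inner_sub_right, inner_add_left, inner_add_right,
      inner_smul_left, inner_smul_right, real_inner_comm] at H ⊢
    simp only [conj_trivial]
    linarith
  have e1 : ‖(2:ℝ) • a - (b + d)‖ ≤ ‖b - d‖ :=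
    (sq_le_sq₀ (norm_nonneg _) (norm_nonneg _)).1 e
  have e2 : ‖(2:ℝ) • a‖ ≤ ‖(2:ℝ) • a - (b + d)‖ + ‖b + d‖ := by
    simpa using norm_add_le ((2:ℝ) • a - (b + d)) (b + d)
  rw [norm_smul] at e2
  norm_num at e2
  have := norm_sub_le b d
  have := norm_add_le b d
  linarith

theorem statement4
    {Y : Type*}
    [NormedAddCommGroup Y] [InnerProductSpace ℝ Y] [CompleteSpace Y]
    (h : Y → EReal)
    (hh_bot : ∀ u : Y, h u ≠ ⊥) (hh_top : ∃ u : Y, h u ≠ ⊤)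
    (hh_lsc : LowerSemicontinuous h)
    (hh_cvx : ∀ u v : Y, ∀ a b : ℝ, 0 ≤ a → 0 ≤ b → a + b = 1 →
      h (a • u + b • v) ≤ (a : EReal) * h u + (b : EReal) * h v)
    (γ : ℕ → ℝ) (hγ : ∀ k : ℕ, 0 < γ k) (ε : ℕ → ℝ) (hε : ∀ k : ℕ, 0 ≤ ε k)
    (lam lamstar sstar ss : ℕ → Y)
    (hmin : ∀ (k : ℕ) (μ : Y),
      h (lamstar (k+1)) + ((‖lam k - lamstar (k+1)‖ ^ 2 / (2 * γ k) : ℝ) : EReal)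
        ≤ h μ + ((‖lam k - μ‖ ^ 2 / (2 * γ k) : ℝ) : EReal))
    (hsstar : ∀ k : ℕ, sstar (k+1) = (γ k)⁻¹ • (lam k - lamstar (k+1)))
    (herr : ∀ k : ℕ, ‖lam (k+1) - lamstar (k+1)‖ ≤ ε (k+1))
    (hss : ∀ k : ℕ, ss (k+1) = (γ k)⁻¹ • (lam k - lam (k+1)))
    (A1 : Summable ε)
    (A2 : (fun k : ℕ => ε (k+1) / γ k * ∑ i ∈ Finset.range (k+1), γ i)
        =O[atTop] fun k : ℕ => 1 / Real.sqrt (∑ i ∈ Finset.range (k+1), γ i))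
    (A3 : Summable fun k : ℕ => (ε (k+1) / γ (k+1)) ^ 2 * ∑ i ∈ Finset.range (k+1), γ i)
    (A4 : Summable fun k : ℕ => ε (k+1) / γ (k+1) * ∑ i ∈ Finset.range (k+1), γ i)
    (A5 : Tendsto (fun n : ℕ => ∑ i ∈ Finset.range n, γ i) atTop atTop)
    :
    ∃ M : ℝ, (∀ k : ℕ, ‖sstar (k+1)‖ ≤ M) ∧ (∀ k : ℕ, ‖ss (k+1)‖ ≤ M) := by
  have hfin : ∀ k, h (lamstar (k+1)) ≠ ⊤ := fun k =>
    prox_finite h hh_top (lam k) (lamstar (k+1)) (γ k) (hmin k)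
  have hH : ∀ k, h (lamstar (k+1)) = (((h (lamstar (k+1))).toReal : ℝ) : EReal) := fun k =>
    (EReal.coe_toReal (hfin k) (hh_bot _)).symm
  have hsub : ∀ k j, (h (lamstar (k+1))).toReal
      + ⟪sstar (k+1), lamstar (j+1) - lamstar (k+1)⟫ ≤ (h (lamstar (j+1))).toReal := by
    intro k j
    have := prox_subgrad h hh_cvx (lam k) (lamstar (k+1)) (lamstar (j+1)) (γ k) _ _ (hγ k)
      (hH k) (hH j) (hmin k)
    rw [hsstar, real_inner_smul_left]
    exact this
  have hstep : ∀ k, ‖sstar (k+2)‖ ≤ ‖sstar (k+1)‖ + ε (k+1) / γ (k+1) := by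
    intro k
    have m1 := hsub k (k+1)
    have m2 := hsub (k+1) k
    have g := hγ (k+1)
    set e := lam (k+1) - lamstar (k+1) with he
    have hd : lamstar (k+2) - lamstar (k+1)
        = (- γ (k+1)) • (sstar (k+2) - (γ (k+1))⁻¹ • e) := by
      rw [hsstar (k+1), ← smul_sub, smul_smul, neg_mul, mul_inv_cancel₀ g.ne', he]
      module
    have hmono : ⟪sstar (k+2) - sstar (k+1), lamstar (k+2) - lamstar (k+1)⟫ ≥ (0:ℝ) := by
      have e3 : lamstar (k+1) - lamstar (k+2) = -(lamstar (k+2) - lamstar (k+1)) := by abel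
      change _ + ⟪sstar (k+2), lamstar (k+1) - lamstar (k+2)⟫ ≤ _ at m2
      rw [e3, inner_neg_right] at m2
      rw [inner_sub_left]
      change _ + ⟪sstar (k+1), lamstar (k+2) - lamstar (k+1)⟫ ≤ _ at m1
      linarith
    rw [hd, inner_smul_right] at hmono
    have hle := ball_norm_le (sstar (k+2)) (sstar (k+1)) ((γ (k+1))⁻¹ • e) (by nlinarith)
    have hn : ‖(γ (k+1))⁻¹ • e‖ ≤ ε (k+1) / γ (k+1) := by
      rw [norm_smul, Real.norm_of_nonneg (by positivity), div_eq_inv_mul]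
      exact mul_le_mul_of_nonneg_left (herr k) (by positivity)
    linarith
  have hΓ : ∀ k, γ 0 ≤ ∑ i ∈ Finset.range (k+1), γ i := fun k =>
    Finset.single_le_sum (f := γ) (fun i _ => (hγ i).le) (by simp)
  have hsum : Summable fun k : ℕ => ε (k+1) / γ (k+1) := by
    refine Summable.of_nonneg_of_le (fun k => div_nonneg (hε _) (hγ _).le) (fun k => ?_)
      (A4.mul_left (γ 0)⁻¹)
    have h0 : 0 ≤ ε (k+1) / γ (k+1) := div_nonneg (hε _) (hγ _).le
    rw [inv_mul_eq_div, le_div_iff₀ (hγ 0)]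
    exact mul_le_mul_of_nonneg_left (hΓ k) h0
  have hbd : ∀ k, ‖sstar (k+1)‖ ≤ ‖sstar 1‖ + ∑ i ∈ Finset.range k, ε (i+1) / γ (i+1) := by
    intro k
    induction k with
    | zero => simp
    | succ n ih =>
      rw [Finset.sum_range_succ]
      have := hstep n
      change ‖sstar (n+2)‖ ≤ _
      linarith
  have hbd2 : ∀ k, ‖sstar (k+1)‖ ≤ ‖sstar 1‖ + ∑' i, ε (i+1) / γ (i+1) := by
    intro k
    have := hsum.sum_le_tsum (Finset.range k) (fun i _ => div_nonneg (hε _) (hγ _).le)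
    linarith [hbd k]
  -- the error quotients are bounded
  have hq : ∃ B : ℝ, ∀ k, ε (k+1) / γ k ≤ B := by
    obtain ⟨c, hc⟩ := A2.bound
    have hev : ∀ᶠ k in atTop, ε (k+1) / γ k ≤ |c| * (1 / Real.sqrt (γ 0)) / γ 0 := by
      filter_upwards [hc] with k hk
      have h0 : 0 ≤ ε (k+1) / γ k := div_nonneg (hε _) (hγ _).le
      have hs := Real.sqrt_pos.2 (hγ 0)
      rw [le_div_iff₀ (hγ 0)]
      calc ε (k+1) / γ k * γ 0 ≤ ε (k+1) / γ k * ∑ i ∈ Finset.range (k+1), γ i :=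
            mul_le_mul_of_nonneg_left (hΓ k) h0
        _ ≤ _ := (le_abs_self _).trans hk
        _ ≤ |c| * ‖1 / Real.sqrt (∑ i ∈ Finset.range (k+1), γ i)‖ :=
            mul_le_mul_of_nonneg_right (le_abs_self c) (norm_nonneg _)
        _ ≤ _ := by
            rw [Real.norm_of_nonneg (by positivity)]
            refine mul_le_mul_of_nonneg_left ?_ (abs_nonneg c)
            exact one_div_le_one_div_of_le hs (Real.sqrt_le_sqrt (hΓ k))
    obtain ⟨N, hN⟩ := eventually_atTop.1 hev
    refine ⟨|c| * (1 / Real.sqrt (γ 0)) / γ 0 + ∑ i ∈ Finset.range N, ε (i+1) / γ i, fun k => ?_⟩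
    have hnn : ∀ i, 0 ≤ ε (i+1) / γ i := fun i => div_nonneg (hε _) (hγ _).le
    have h0 := hγ 0
    rcases le_or_gt N k with hk | hk
    · have := hN k hk
      have := Finset.sum_nonneg (s := Finset.range N) (fun i _ => hnn i)
      linarith
    · have := Finset.single_le_sum (f := fun i => ε (i+1) / γ i) (fun i _ => hnn i)
        (Finset.mem_range.2 hk)
      have : 0 ≤ |c| * (1 / Real.sqrt (γ 0)) / γ 0 := by positivity
      linarith
  obtain ⟨B, hB⟩ := hq
  have hB0 : 0 ≤ B := (div_nonneg (hε _) (hγ _).le).trans (hB 0)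
  refine ⟨‖sstar 1‖ + ∑' i, ε (i+1) / γ (i+1) + B, fun k => by linarith [hbd2 k], fun k => ?_⟩
  have e : ss (k+1) = sstar (k+1) - (γ k)⁻¹ • (lam (k+1) - lamstar (k+1)) := by
    rw [hss, hsstar]; module
  have g := hγ k
  have hn : ‖(γ k)⁻¹ • (lam (k+1) - lamstar (k+1))‖ ≤ ε (k+1) / γ k := by
    rw [norm_smul, Real.norm_of_nonneg (by positivity), div_eq_inv_mul]
    exact mul_le_mul_of_nonneg_left (herr k) (by positivity)
  rw [e]
  linarith [norm_sub_le (sstar (k+1)) ((γ k)⁻¹ • (lam (k+1) - lamstar (k+1))), hbd2 k, hB k]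
end
end

section
/- For an IPPA sequence on a proper, convex, lower semicontinuous function h with errors and step sizes satisfying (A1)–(A5), the sequences s⋆^k and s^k both converge strongly to s̄, the element of minimal norm in cl(range ∂h). If moreover h*(s̄) < ∞, then the following rates hold: (a) ‖s⋆^N‖² − ‖s̄‖² = O(1/∑_{i=0}^{N−1} γ_i); (b) ‖s^N‖² − ‖s̄‖² = O(1/∑_{i=0}^{N−1} γ_i); (c) ‖s⋆^N − s̄‖ = O(1/√(∑_{i=0}^{N−1} γ_i)); (d) ‖s^N − s̄‖ = O(1/√(∑_{i=0}^{N−1} γ_i)). -/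
open scoped RealInnerProductSpace
open Filter Asymptotics

noncomputable section

/-- Sequences with summable nonnegative increments are bounded above. -/
theorem aux_quasi (a b : ℕ → ℝ) (hb : ∀ k, 0 ≤ b k) (hs : Summable b)
    (hab : ∀ k, a (k+1) ≤ a k + b k) (n : ℕ) : a n ≤ a 0 + ∑' k, b k := by
  have h1 : ∀ n, a n ≤ a 0 + ∑ k ∈ Finset.range n, b k := by
    intro n
    induction n with
    | zero => simp
    | succ k ih => rw [Finset.sum_range_succ]; linarith [hab k]
  have h2 := hs.sum_le_tsum (Finset.range n) (fun i _ => hb i)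
  linarith [h1 n]

theorem aux_lim (X Z : ℝ) (hX : ∀ t : ℝ, 0 < t → t ≤ 1 → X ≤ t * Z) : X ≤ 0 := by
  by_contra hc
  push Not at hc
  have h1 := hX 1 one_pos le_rfl
  have hZ : 0 < Z := by linarith
  have h2 := hX (X / (2 * Z)) (by positivity) (by rw [div_le_one (by positivity)]; linarith)
  have h3 : X / (2 * Z) * Z = X / 2 := by field_simp
  linarith

theorem aux_subdiff {Y : Type*} [NormedAddCommGroup Y] [InnerProductSpace ℝ Y]
    (h : Y → EReal) (hh_bot : ∀ u : Y, h u ≠ ⊥) (hh_top : ∃ u : Y, h u ≠ ⊤)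
    (hh_cvx : ∀ u v : Y, ∀ a b : ℝ, 0 ≤ a → 0 ≤ b → a + b = 1 →
      h (a • u + b • v) ≤ (a : EReal) * h u + (b : EReal) * h v)
    (g : ℝ) (hg : 0 < g) (l p : Y)
    (hmin : ∀ μ : Y, h p + ((‖l - p‖ ^ 2 / (2 * g) : ℝ) : EReal)
        ≤ h μ + ((‖l - μ‖ ^ 2 / (2 * g) : ℝ) : EReal)) :
    h p ≠ ⊤ ∧ g⁻¹ • (l - p) ∈ subdiff h p := by
  have hfin : h p ≠ ⊤ := by
    obtain ⟨u, hu⟩ := hh_top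
    intro hp
    have h1 := hmin u
    rw [hp] at h1
    lift h u to ℝ using ⟨hu, hh_bot u⟩ with b
    rw [EReal.top_add_coe, ← EReal.coe_add] at h1
    exact EReal.coe_ne_top _ (top_le_iff.1 h1)
  refine ⟨hfin, ?_⟩
  intro μ
  by_cases hμ : h μ = ⊤
  · rw [hμ]; exact le_top
  obtain ⟨a, ha⟩ : ∃ a : ℝ, h p = a := ⟨(h p).toReal, (EReal.coe_toReal hfin (hh_bot p)).symm⟩
  obtain ⟨b, hb⟩ : ∃ a : ℝ, h μ = a := ⟨(h μ).toReal, (EReal.coe_toReal hμ (hh_bot μ)).symm⟩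
  rw [ha, hb, ← EReal.coe_add, EReal.coe_le_coe_iff]
  suffices hX : a + ⟪g⁻¹ • (l - p), μ - p⟫ - b ≤ 0 by linarith
  apply aux_lim _ (‖μ - p‖ ^ 2 / (2 * g))
  intro t ht ht1
  have h1 := hmin ((1 - t) • p + t • μ)
  have h2 := hh_cvx p μ (1 - t) t (by linarith) ht.le (by ring)
  rw [ha, hb, ← EReal.coe_mul, ← EReal.coe_mul, ← EReal.coe_add] at h2
  have h3 := h1.trans (add_le_add_left h2 _)
  rw [ha, ← EReal.coe_add, ← EReal.coe_add, EReal.coe_le_coe_iff] at h3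
  have h4 : l - ((1 - t) • p + t • μ) = (l - p) - t • (μ - p) := by
    module
  rw [h4, norm_sub_sq_real (l - p), inner_smul_right, norm_smul, mul_pow, Real.norm_eq_abs, sq_abs] at h3
  rw [inner_smul_left]
  simp only [conj_trivial]
  have h5 : t * (a + g⁻¹ * ⟪l - p, μ - p⟫ - b) ≤ t * (t * (‖μ - p‖ ^ 2 / (2 * g))) := by
    have e1 : (‖l - p‖ ^ 2 - 2 * (t * ⟪l - p, μ - p⟫) + t ^ 2 * ‖μ - p‖ ^ 2) / (2 * g)
      = ‖l - p‖ ^ 2 / (2 * g) - t * (g⁻¹ * ⟪l - p, μ - p⟫)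
        + t * (t * (‖μ - p‖ ^ 2 / (2 * g))) := by
      field_simp
    rw [e1] at h3
    linarith
  exact le_of_mul_le_mul_left h5 ht

theorem aux_key {Y : Type*} [NormedAddCommGroup Y] [InnerProductSpace ℝ Y]
    (γ : ℕ → ℝ) (hγ : ∀ k : ℕ, 0 < γ k) (ε : ℕ → ℝ) (hε : ∀ k : ℕ, 0 ≤ ε k)
    (A1 : Summable ε)
    (A3 : Summable fun k : ℕ => (ε (k+1) / γ (k+1)) ^ 2 * ∑ i ∈ Finset.range (k+1), γ i)
    (S p e : ℕ → Y) (H : ℕ → ℝ)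
    (hsub : ∀ k j, H k + ⟪S k, p j - p k⟫ ≤ H j)
    (hp : ∀ k, p (k+1) = p k + e k - γ (k+1) • S (k+1))
    (he : ∀ k, ‖e k‖ ≤ ε (k+1)) (w : Y) (C : ℝ) (hw : ∀ k, ⟪w, p k⟫ - C ≤ H k) :
    ∃ K : ℝ, 0 ≤ K ∧ ∀ k, (∑ i ∈ Finset.range (k+1), γ i) * (‖S k‖ ^ 2 - ‖w‖ ^ 2) ≤ K := by
  have hΓ0 : ∀ k, γ 0 ≤ ∑ i ∈ Finset.range (k+1), γ i := fun k =>
    Finset.single_le_sum (f := γ) (fun i _ => (hγ i).le) (by simp)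
  have hδ : Summable fun k : ℕ => (ε (k+1) / γ (k+1)) ^ 2 := by
    refine Summable.of_nonneg_of_le (fun k => sq_nonneg _) (fun k => ?_) (A3.mul_left (γ 0)⁻¹)
    have h0 := hγ 0
    rw [mul_comm, mul_assoc]
    have h1 : 1 ≤ (∑ i ∈ Finset.range (k+1), γ i) * (γ 0)⁻¹ := by
      rw [← div_eq_mul_inv, one_le_div h0]; exact hΓ0 k
    exact le_mul_of_one_le_right (sq_nonneg _) h1
  have hmono : ∀ k, ‖S (k+1)‖ ^ 2 ≤ ‖S k‖ ^ 2 + (ε (k+1) / γ (k+1)) ^ 2 := by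
    intro k
    have h1 := hsub k (k+1)
    have h2 := hsub (k+1) k
    have g0 := hγ (k+1)
    have e1 : p (k+1) - p k = e k - γ (k+1) • S (k+1) := by rw [hp]; abel
    have e2 : p k - p (k+1) = -(e k - γ (k+1) • S (k+1)) := by rw [← e1]; abel
    rw [e1] at h1
    rw [e2] at h2
    set d := (γ (k+1))⁻¹ • e k with hd
    have e3 : e k = γ (k+1) • d := by rw [hd, smul_smul, mul_inv_cancel₀ g0.ne', one_smul]
    rw [e3, ← smul_sub, inner_smul_right] at h1
    rw [e3, ← smul_sub, inner_neg_right, inner_smul_right] at h2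
    have h3 : γ (k+1) * ⟪S k, d - S (k+1)⟫ ≤ γ (k+1) * ⟪S (k+1), d - S (k+1)⟫ := by linarith
    have h4 := le_of_mul_le_mul_left h3 g0
    have hdn : ‖d‖ ≤ ε (k+1) / γ (k+1) := by
      rw [hd, norm_smul, Real.norm_eq_abs, abs_of_pos (inv_pos.2 g0), inv_mul_eq_div]
      exact div_le_div_of_nonneg_right (he k) g0.le
    have hdn2 : ‖d‖ ^ 2 ≤ (ε (k+1) / γ (k+1)) ^ 2 := pow_le_pow_left₀ (norm_nonneg _) hdn 2
    have h5 := sq_nonneg ‖S (k+1) - S k - d‖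
    rw [norm_sub_sq_real, norm_sub_sq_real, inner_sub_left] at h5
    rw [inner_sub_right, inner_sub_right, real_inner_self_eq_norm_sq] at h4
    rw [real_inner_comm (S k) (S (k+1))] at h5
    rw [real_inner_comm (S (k+1)) (S k)] at h5
    rw [real_inner_comm] at h5
    nlinarith [real_inner_comm (S (k+1)) (S k)]
  have hbd := aux_quasi (fun k => ‖S k‖ ^ 2) _ (fun k => sq_nonneg _) hδ hmono
  set M := ‖S 0‖ ^ 2 + ∑' k, (ε (k+1) / γ (k+1)) ^ 2 with hM
  have hSM : ∀ k, ‖S k‖ ≤ Real.sqrt M := fun k => Real.le_sqrt_of_sq_le (hbd k)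
  have hstep : ∀ k, (∑ i ∈ Finset.range (k+1+1), γ i) * (‖S (k+1)‖ ^ 2 - ‖w‖ ^ 2)
        + 2 * (H (k+1) - ⟪w, p (k+1)⟫)
      ≤ ((∑ i ∈ Finset.range (k+1), γ i) * (‖S k‖ ^ 2 - ‖w‖ ^ 2) + 2 * (H k - ⟪w, p k⟫))
        + ((ε (k+1) / γ (k+1)) ^ 2 * (∑ i ∈ Finset.range (k+1), γ i)
          + 2 * (Real.sqrt M + ‖w‖) * ε (k+1)) := by
    intro k
    rw [Finset.sum_range_succ _ (k+1)]
    have hG : 0 ≤ ∑ i ∈ Finset.range (k+1), γ i := (hγ 0).le.trans (hΓ0 k)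
    set G := ∑ i ∈ Finset.range (k+1), γ i
    have g0 := hγ (k+1)
    have h1 := mul_le_mul_of_nonneg_left (hmono k) hG
    have h2 := hsub (k+1) k
    have e2 : p k - p (k+1) = γ (k+1) • S (k+1) - e k := by rw [hp]; abel
    have e3 : ⟪w, p k⟫ = ⟪w, p (k+1)⟫ + ⟪w, γ (k+1) • S (k+1) - e k⟫ := by
      rw [← inner_add_right, ← e2]; congr 1; abel
    rw [e2, inner_sub_right, inner_smul_right, real_inner_self_eq_norm_sq] at h2
    rw [inner_sub_right, inner_smul_right] at e3
    have h6 : ⟪S (k+1) - w, e k⟫ ≤ (Real.sqrt M + ‖w‖) * ε (k+1) := by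
      refine (real_inner_le_norm _ _).trans ?_
      refine mul_le_mul ((norm_sub_le _ _).trans (by linarith [hSM (k+1)])) (he k)
        (norm_nonneg _) (by positivity)
    rw [inner_sub_left] at h6
    have h7 := sq_nonneg ‖S (k+1) - w‖
    rw [norm_sub_sq_real, real_inner_comm] at h7
    have h8 := mul_le_mul_of_nonneg_left h7 g0.le
    nlinarith
  have hsumm : Summable fun k : ℕ => ((ε (k+1) / γ (k+1)) ^ 2 * (∑ i ∈ Finset.range (k+1), γ i)
          + 2 * (Real.sqrt M + ‖w‖) * ε (k+1)) :=
    A3.add (((summable_nat_add_iff 1).2 A1).mul_left _)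
  have hfin := aux_quasi (fun k => (∑ i ∈ Finset.range (k+1), γ i) * (‖S k‖ ^ 2 - ‖w‖ ^ 2)
    + 2 * (H k - ⟪w, p k⟫)) _ (fun k => by
      have hG : 0 ≤ ∑ i ∈ Finset.range (k+1), γ i := (hγ 0).le.trans (hΓ0 k)
      have := hε (k+1)
      positivity) hsumm hstep
  obtain ⟨B, hB⟩ : ∃ B : ℝ, ∀ k, (∑ i ∈ Finset.range (k+1), γ i) * (‖S k‖ ^ 2 - ‖w‖ ^ 2)
    + 2 * (H k - ⟪w, p k⟫) ≤ B := ⟨_, hfin⟩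
  refine ⟨max 0 (B + 2 * C), le_max_left _ _, fun k => le_trans ?_ (le_max_right _ _)⟩
  linarith [hB k, hw k]

theorem statement6
    {Y : Type*}
    [NormedAddCommGroup Y] [InnerProductSpace ℝ Y] [CompleteSpace Y]
    (h : Y → EReal)
    (hh_bot : ∀ u : Y, h u ≠ ⊥) (hh_top : ∃ u : Y, h u ≠ ⊤)
    (hh_lsc : LowerSemicontinuous h)
    (hh_cvx : ∀ u v : Y, ∀ a b : ℝ, 0 ≤ a → 0 ≤ b → a + b = 1 →
      h (a • u + b • v) ≤ (a : EReal) * h u + (b : EReal) * h v)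
    (γ : ℕ → ℝ) (hγ : ∀ k : ℕ, 0 < γ k) (ε : ℕ → ℝ) (hε : ∀ k : ℕ, 0 ≤ ε k)
    (lam lamstar sstar ss : ℕ → Y)
    (hmin : ∀ (k : ℕ) (μ : Y),
      h (lamstar (k+1)) + ((‖lam k - lamstar (k+1)‖ ^ 2 / (2 * γ k) : ℝ) : EReal)
        ≤ h μ + ((‖lam k - μ‖ ^ 2 / (2 * γ k) : ℝ) : EReal))
    (hsstar : ∀ k : ℕ, sstar (k+1) = (γ k)⁻¹ • (lam k - lamstar (k+1)))
    (herr : ∀ k : ℕ, ‖lam (k+1) - lamstar (k+1)‖ ≤ ε (k+1))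
    (hss : ∀ k : ℕ, ss (k+1) = (γ k)⁻¹ • (lam k - lam (k+1)))
    (A1 : Summable ε)
    (A2 : (fun k : ℕ => ε (k+1) / γ k * ∑ i ∈ Finset.range (k+1), γ i)
        =O[atTop] fun k : ℕ => 1 / Real.sqrt (∑ i ∈ Finset.range (k+1), γ i))
    (A3 : Summable fun k : ℕ => (ε (k+1) / γ (k+1)) ^ 2 * ∑ i ∈ Finset.range (k+1), γ i)
    (A4 : Summable fun k : ℕ => ε (k+1) / γ (k+1) * ∑ i ∈ Finset.range (k+1), γ i)
    (A5 : Tendsto (fun n : ℕ => ∑ i ∈ Finset.range n, γ i) atTop atTop)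
    (sbar : Y)
    (hsbar_mem : sbar ∈ closure {v : Y | ∃ u : Y, v ∈ subdiff h u})
    (hsbar_min : ∀ v ∈ closure {v : Y | ∃ u : Y, v ∈ subdiff h u}, ‖sbar‖ ≤ ‖v‖)
    :
    Tendsto (fun k : ℕ => sstar k) atTop (nhds sbar) ∧
    Tendsto (fun k : ℕ => ss k) atTop (nhds sbar) ∧
    (fenchel h sbar < ⊤ →
      ((fun N : ℕ => ‖sstar N‖ ^ 2 - ‖sbar‖ ^ 2) =O[atTop]
          fun N : ℕ => 1 / ∑ i ∈ Finset.range N, γ i) ∧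
      ((fun N : ℕ => ‖ss N‖ ^ 2 - ‖sbar‖ ^ 2) =O[atTop]
          fun N : ℕ => 1 / ∑ i ∈ Finset.range N, γ i) ∧
      ((fun N : ℕ => ‖sstar N - sbar‖) =O[atTop]
          fun N : ℕ => 1 / Real.sqrt (∑ i ∈ Finset.range N, γ i)) ∧
      ((fun N : ℕ => ‖ss N - sbar‖) =O[atTop]
          fun N : ℕ => 1 / Real.sqrt (∑ i ∈ Finset.range N, γ i))) := by
  have hΓ0 : ∀ k, 0 < ∑ i ∈ Finset.range (k+1), γ i := fun k =>
    Finset.sum_pos (fun i _ => hγ i) ⟨0, by simp⟩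
  have hA := fun k => aux_subdiff h hh_bot hh_top hh_cvx (γ k) (hγ k) (lam k) (lamstar (k+1)) (hmin k)
  have hsubm : ∀ k, sstar (k+1) ∈ subdiff h (lamstar (k+1)) := fun k => by
    rw [hsstar]; exact (hA k).2
  have hHc : ∀ k, ((h (lamstar (k+1))).toReal : EReal) = h (lamstar (k+1)) := fun k =>
    EReal.coe_toReal (hA k).1 (hh_bot _)
  -- key estimate for all `w` in the domain of the conjugate
  have key : ∀ (w : Y) (C : ℝ), (∀ u, ((⟪w, u⟫ - C : ℝ) : EReal) ≤ h u) →
      ∃ K : ℝ, 0 ≤ K ∧ ∀ k, (∑ i ∈ Finset.range (k+1), γ i) *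
        (‖sstar (k+1)‖ ^ 2 - ‖w‖ ^ 2) ≤ K := by
    intro w C hw
    refine aux_key γ hγ ε hε A1 A3 (fun k => sstar (k+1)) (fun k => lamstar (k+1))
      (fun k => lam (k+1) - lamstar (k+1)) (fun k => (h (lamstar (k+1))).toReal)
      ?_ ?_ herr w C ?_
    · intro k j
      have := hsubm k (lamstar (j+1))
      rw [← hHc k, ← hHc j, ← EReal.coe_add, EReal.coe_le_coe_iff] at this
      exact this
    · intro k
      simp only [hsstar (k+1), smul_smul, mul_inv_cancel₀ (hγ (k+1)).ne', one_smul]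
      abel
    · intro k
      have := hw (lamstar (k+1))
      rw [← hHc k, EReal.coe_le_coe_iff] at this
      exact this
  set R : Set Y := {v : Y | ∃ u : Y, v ∈ subdiff h u} with hR
  have hSR : ∀ k, sstar (k+1) ∈ R := fun k => ⟨_, hsubm k⟩
  -- elements of the range have finite conjugate
  have hRD : ∀ v ∈ R, ∃ C : ℝ, ∀ u, ((⟪v, u⟫ - C : ℝ) : EReal) ≤ h u := by
    rintro v ⟨u, hu⟩
    have hut : h u ≠ ⊤ := by
      intro ht
      obtain ⟨x, hx⟩ := hh_top
      have := hu x
      rw [ht, EReal.top_add_coe] at this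
      exact hx (top_le_iff.1 this)
    obtain ⟨a, ha⟩ : ∃ a : ℝ, h u = a := ⟨(h u).toReal, (EReal.coe_toReal hut (hh_bot u)).symm⟩
    refine ⟨⟪v, u⟫ - a, fun x => ?_⟩
    have := hu x
    rw [ha, ← EReal.coe_add, inner_sub_right] at this
    convert this using 2
    ring
  have hDmin : ∀ (w : Y) (C : ℝ), (∀ u, ((⟪w, u⟫ - C : ℝ) : EReal) ≤ h u) → ‖sbar‖ ≤ ‖w‖ := by
    intro w C hw
    obtain ⟨K, hK0, hK⟩ := key w C hw
    by_contra hlt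
    push Not at hlt
    have hpos : 0 < ‖sbar‖ ^ 2 - ‖w‖ ^ 2 := by
      have := pow_lt_pow_left₀ hlt (norm_nonneg w) (two_ne_zero)
      linarith
    obtain ⟨k, hk⟩ := (((tendsto_add_atTop_iff_nat 1).2 A5).eventually_gt_atTop
      (K / (‖sbar‖ ^ 2 - ‖w‖ ^ 2))).exists
    rw [div_lt_iff₀ hpos] at hk
    have h1 := hsbar_min _ (subset_closure (hSR k))
    have h2 := pow_le_pow_left₀ (norm_nonneg sbar) h1 2
    have h3 := mul_le_mul_of_nonneg_left (sub_le_sub_right h2 (‖w‖ ^ 2)) (hΓ0 k).le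
    linarith [hK k]
  have hmid : ∀ v ∈ R, ‖sbar‖ ≤ ‖(1/2 : ℝ) • (v + sbar)‖ := by
    intro v hv
    have hcl : IsClosed {x : Y | ‖sbar‖ ≤ ‖(1/2 : ℝ) • (v + x)‖} :=
      isClosed_le continuous_const (by fun_prop)
    refine closure_minimal (s := R) ?_ hcl hsbar_mem
    intro x hx
    obtain ⟨C1, h1⟩ := hRD v hv
    obtain ⟨C2, h2⟩ := hRD x hx
    refine hDmin _ ((C1 + C2) / 2) fun u => ?_
    by_cases hu : h u = ⊤
    · rw [hu]; exact le_top
    have a1 := h1 u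
    have a2 := h2 u
    rw [← EReal.coe_toReal hu (hh_bot u), EReal.coe_le_coe_iff] at a1 a2 ⊢
    rw [inner_smul_left, inner_add_left]
    simp only [conj_trivial]
    linarith
  have hdist : ∀ k, ‖sstar (k+1) - sbar‖ ^ 2 ≤ 2 * (‖sstar (k+1)‖ ^ 2 - ‖sbar‖ ^ 2) := by
    intro k
    have h1 := pow_le_pow_left₀ (norm_nonneg sbar) (hmid _ (hSR k)) 2
    rw [norm_smul, mul_pow, Real.norm_eq_abs, sq_abs, norm_add_sq_real] at h1
    rw [norm_sub_sq_real]
    linarith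
  have hφ0 : ∀ k, 0 ≤ ‖sstar (k+1)‖ ^ 2 - ‖sbar‖ ^ 2 := fun k => by
    nlinarith [hdist k, sq_nonneg ‖sstar (k+1) - sbar‖]
  have A5' := (tendsto_add_atTop_iff_nat 1).2 A5
  -- norm convergence
  have hnorm : Tendsto (fun k => ‖sstar (k+1)‖ ^ 2 - ‖sbar‖ ^ 2) atTop (nhds 0) := by
    refine tendsto_order.2 ⟨fun a ha => Eventually.of_forall fun k => ha.trans_le (hφ0 k),
      fun a ha => ?_⟩
    have hop : IsOpen {x : Y | ‖x‖ ^ 2 < ‖sbar‖ ^ 2 + a / 2} :=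
      isOpen_lt (by fun_prop) continuous_const
    obtain ⟨w, hw1, hw2⟩ := mem_closure_iff.1 hsbar_mem _ hop
      (show ‖sbar‖ ^ 2 < ‖sbar‖ ^ 2 + a / 2 by linarith)
    have hw1' : ‖w‖ ^ 2 < ‖sbar‖ ^ 2 + a / 2 := hw1
    obtain ⟨C, hC⟩ := hRD w hw2
    obtain ⟨K, hK0, hK⟩ := key w C hC
    filter_upwards [A5'.eventually_gt_atTop (K / (a / 2))] with k hk
    rw [div_lt_iff₀ (by linarith)] at hk
    have h1 := lt_of_mul_lt_mul_left ((hK k).trans_lt hk) (hΓ0 k).le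
    linarith
  have hT1 : Tendsto (fun k : ℕ => sstar k) atTop (nhds sbar) := by
    rw [← tendsto_add_atTop_iff_nat 1, tendsto_iff_norm_sub_tendsto_zero]
    have h2 : Tendsto (fun k => ‖sstar (k+1) - sbar‖ ^ 2) atTop (nhds 0) := by
      refine squeeze_zero (fun k => sq_nonneg _) hdist ?_
      simpa using hnorm.const_mul 2
    have h3 := h2.sqrt
    simpa [Real.sqrt_sq] using h3
  -- the difference between exact and inexact
  obtain ⟨c0, hc0⟩ := A2.bound
  set c := max c0 0 with hc
  have hc0' : 0 ≤ c := le_max_right _ _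
  have hdiff : ∀ᶠ k in atTop, 1 ≤ ∑ i ∈ Finset.range (k+1), γ i ∧
      ‖ss (k+1) - sstar (k+1)‖ ≤ c / (∑ i ∈ Finset.range (k+1), γ i) := by
    filter_upwards [hc0, A5'.eventually_ge_atTop 1] with k hk h1
    refine ⟨h1, ?_⟩
    set G := ∑ i ∈ Finset.range (k+1), γ i
    have hG : 0 < G := hΓ0 k
    have g0 := hγ k
    have e1 : ss (k+1) - sstar (k+1) = -((γ k)⁻¹ • (lam (k+1) - lamstar (k+1))) := by
      rw [hss, hsstar]; module
    have h2 : ‖ss (k+1) - sstar (k+1)‖ ≤ ε (k+1) / γ k := by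
      rw [e1, norm_neg, norm_smul, Real.norm_eq_abs, abs_of_pos (inv_pos.2 g0), inv_mul_eq_div]
      exact div_le_div_of_nonneg_right (herr k) g0.le
    refine h2.trans ?_
    rw [le_div_iff₀ hG]
    have hs1 : 1 ≤ Real.sqrt G := Real.one_le_sqrt.2 h1
    have h3 : ‖1 / Real.sqrt G‖ ≤ 1 := by
      rw [Real.norm_eq_abs, abs_of_nonneg (by positivity)]
      rw [div_le_one (by linarith)]; exact hs1
    calc ε (k+1) / γ k * G ≤ ‖ε (k+1) / γ k * G‖ := Real.le_norm_self _
      _ ≤ c0 * ‖1 / Real.sqrt G‖ := hk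
      _ ≤ c * ‖1 / Real.sqrt G‖ := mul_le_mul_of_nonneg_right (le_max_left _ _) (norm_nonneg _)
      _ ≤ c := mul_le_of_le_one_right hc0' h3
  have hT2 : Tendsto (fun k : ℕ => ss k) atTop (nhds sbar) := by
    have h1 : Tendsto (fun k => ss (k+1) - sstar (k+1)) atTop (nhds 0) :=
      squeeze_zero_norm' (hdiff.mono fun k hk => hk.2) (A5'.const_div_atTop c)
    have h2 := h1.add ((tendsto_add_atTop_iff_nat 1).2 hT1)
    rw [← tendsto_add_atTop_iff_nat 1]
    simpa using h2
  refine ⟨hT1, hT2, fun hfen => ?_⟩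
  have hfb : ∃ C : ℝ, ∀ u, ((⟪sbar, u⟫ - C : ℝ) : EReal) ≤ h u := by
    obtain ⟨C, hC1, -⟩ := EReal.lt_iff_exists_real_btwn.1 hfen
    refine ⟨C, fun u => ?_⟩
    by_cases hu : h u = ⊤
    · rw [hu]; exact le_top
    have h1 : ((⟪sbar, u⟫ : ℝ) : EReal) - h u ≤ C :=
      (le_iSup (fun l : Y => ((⟪sbar, l⟫ : ℝ) : EReal) - h l) u).trans hC1.le
    rw [← EReal.coe_toReal hu (hh_bot u), ← EReal.coe_sub, EReal.coe_le_coe_iff] at h1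
    rw [← EReal.coe_toReal hu (hh_bot u), EReal.coe_le_coe_iff]
    linarith
  obtain ⟨C, hC⟩ := hfb
  obtain ⟨K, hK0, hK⟩ := key sbar C hC
  have hshift : ∀ (f g : ℕ → ℝ), ((fun k => f (k+1)) =O[atTop] fun k => g (k+1)) →
      f =O[atTop] g := by
    intro f g hfg
    obtain ⟨c, hc⟩ := hfg.bound
    refine IsBigO.of_bound c ?_
    rw [← map_add_atTop_eq_nat 1]
    exact hc
  have ha : (fun k : ℕ => ‖sstar (k+1)‖ ^ 2 - ‖sbar‖ ^ 2) =O[atTop]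
      fun k : ℕ => 1 / ∑ i ∈ Finset.range (k+1), γ i := by
    refine IsBigO.of_bound K (Eventually.of_forall fun k => ?_)
    have hG := hΓ0 k
    rw [Real.norm_of_nonneg (hφ0 k), Real.norm_of_nonneg (by positivity), mul_one_div,
      le_div_iff₀ hG, mul_comm]
    exact hK k
  have hcc : (fun k : ℕ => ‖sstar (k+1) - sbar‖) =O[atTop]
      fun k : ℕ => 1 / Real.sqrt (∑ i ∈ Finset.range (k+1), γ i) := by
    refine IsBigO.of_bound (Real.sqrt (2 * K)) (Eventually.of_forall fun k => ?_)
    have hG := hΓ0 k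
    rw [norm_norm, Real.norm_of_nonneg (by positivity), mul_one_div, ← Real.sqrt_div (by positivity)]
    refine Real.le_sqrt_of_sq_le ((hdist k).trans ?_)
    rw [le_div_iff₀ hG]
    linarith [hK k]
  have hd1 : (fun k : ℕ => ss (k+1) - sstar (k+1)) =O[atTop]
      fun k : ℕ => 1 / ∑ i ∈ Finset.range (k+1), γ i := by
    refine IsBigO.of_bound c (hdiff.mono fun k hk => ?_)
    have hG := hΓ0 k
    rw [Real.norm_of_nonneg (by positivity), mul_one_div]
    exact hk.2
  have hle : (fun k : ℕ => 1 / ∑ i ∈ Finset.range (k+1), γ i) =O[atTop]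
      fun k : ℕ => 1 / Real.sqrt (∑ i ∈ Finset.range (k+1), γ i) := by
    refine IsBigO.of_bound 1 (hdiff.mono fun k hk => ?_)
    have hG := hΓ0 k
    have hs := Real.sqrt_pos.2 hG
    rw [Real.norm_of_nonneg (by positivity), Real.norm_of_nonneg (by positivity), one_mul]
    refine one_div_le_one_div_of_le hs ?_
    rw [Real.sqrt_le_left (by linarith)]
    nlinarith [hk.1]
  refine ⟨hshift _ _ ha, hshift _ _ ?_, hshift _ _ hcc, hshift _ _ ?_⟩
  · -- difference of squares
    have hb1 : (fun k : ℕ => ‖ss (k+1)‖ + ‖sstar (k+1)‖) =O[atTop] fun _ : ℕ => (1 : ℝ) :=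
      ((((tendsto_add_atTop_iff_nat 1).2 hT2).norm).add
        (((tendsto_add_atTop_iff_nat 1).2 hT1).norm)).isBigO_one ℝ
    have hb2 : (fun k : ℕ => ‖ss (k+1)‖ - ‖sstar (k+1)‖) =O[atTop]
        fun k : ℕ => 1 / ∑ i ∈ Finset.range (k+1), γ i :=
      (IsBigO.of_bound 1 (Eventually.of_forall fun k => by
        rw [one_mul]; exact abs_norm_sub_norm_le _ _)).trans hd1
    have hb3 := (hb1.mul hb2).add (ha.congr_right fun k => (one_mul _).symm)
    refine hb3.congr (fun k => by ring) (fun k => by ring)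
  · have hb4 := (hd1.trans hle).add hcc.of_norm_left
    exact (hb4.congr_left fun k => by abel).norm_left
end
end

section
/- For an IPPA sequence on a proper, convex, lower semicontinuous function h, with M_s a common upper bound for ‖s⋆^k‖ (k ≥ 1) and ‖s̄‖, the vertical distance of the exact iterates to the asymptotic supporting plane of slope s̄ almost decreases: for every k ≥ 1, h(λ⋆^{k+1}) − ⟨λ⋆^{k+1}, s̄⟩ ≤ h(λ⋆^{k}) − ⟨λ⋆^{k}, s̄⟩ + 2 M_s ε_k, where s̄ is the element of minimal norm in cl(range ∂h). -/
open scoped RealInnerProductSpace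
open Filter Asymptotics

noncomputable section

/-- Optimality condition of the proximal subproblem. -/
theorem prox_mem_subdiff
    {Y : Type*} [NormedAddCommGroup Y] [InnerProductSpace ℝ Y]
    (h : Y → EReal)
    (hh_bot : ∀ u : Y, h u ≠ ⊥) (hh_top : ∃ u : Y, h u ≠ ⊤)
    (hh_cvx : ∀ u v : Y, ∀ a b : ℝ, 0 ≤ a → 0 ≤ b → a + b = 1 →
      h (a • u + b • v) ≤ (a : EReal) * h u + (b : EReal) * h v)
    (g : ℝ) (hg : 0 < g) (x p : Y)
    (hmin : ∀ μ : Y, h p + ((‖x - p‖ ^ 2 / (2 * g) : ℝ) : EReal)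
        ≤ h μ + ((‖x - μ‖ ^ 2 / (2 * g) : ℝ) : EReal)) :
    h p ≠ ⊤ ∧ g⁻¹ • (x - p) ∈ subdiff h p := by
  have hp : h p ≠ ⊤ := by
    obtain ⟨u, hu⟩ := hh_top
    intro hp
    have := hmin u
    rw [hp, EReal.top_add_coe] at this
    lift h u to ℝ using ⟨hu, hh_bot u⟩ with c
    rw [← EReal.coe_add, top_le_iff] at this
    exact EReal.coe_ne_top _ this
  refine ⟨hp, ?_⟩
  intro w
  by_cases hw : h w = ⊤
  · rw [hw]; exact le_top
  obtain ⟨a, ha⟩ : ∃ a : ℝ, h p = a := ⟨(h p).toReal, (EReal.coe_toReal hp (hh_bot p)).symm⟩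
  obtain ⟨b, hb⟩ : ∃ b : ℝ, h w = b := ⟨(h w).toReal, (EReal.coe_toReal hw (hh_bot w)).symm⟩
  have key : ∀ t : ℝ, 0 < t → t < 1 →
      a + g⁻¹ * ⟪x - p, w - p⟫ - b ≤ t * (‖w - p‖ ^ 2 / (2 * g)) := by
    intro t ht ht1
    have h1 := hmin ((1 - t) • p + t • w)
    have h2 := hh_cvx p w (1 - t) t (by linarith) ht.le (by ring)
    have h3 := h1.trans (add_le_add_left h2 _)
    rw [ha, hb] at h3
    norm_cast at h3
    have e : x - ((1 - t) • p + t • w) = (x - p) - t • (w - p) := by module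
    rw [e, norm_sub_sq_real (x - p), inner_smul_right, norm_smul, mul_pow, Real.norm_eq_abs,
      sq_abs] at h3
    have h4 : t * (a + g⁻¹ * ⟪x - p, w - p⟫ - b) ≤ t * (t * (‖w - p‖ ^ 2 / (2 * g))) := by
      have e2 : (‖x - p‖ ^ 2 - 2 * (t * ⟪x - p, w - p⟫) + t ^ 2 * ‖w - p‖ ^ 2) / (2 * g)
        = ‖x - p‖ ^ 2 / (2 * g) - t * (g⁻¹ * ⟪x - p, w - p⟫)
          + t * (t * (‖w - p‖ ^ 2 / (2 * g))) := by
        field_simp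
      rw [e2] at h3
      linarith
    exact le_of_mul_le_mul_left h4 ht
  rw [ha, hb, inner_smul_left]
  norm_cast
  simp only [conj_trivial]
  have hB : 0 ≤ ‖w - p‖ ^ 2 / (2 * g) := by positivity
  generalize ‖w - p‖ ^ 2 / (2 * g) = B at key hB
  by_contra hcon
  push Not at hcon
  obtain ⟨A, hA⟩ : ∃ A, A = a + g⁻¹ * ⟪x - p, w - p⟫ - b := ⟨_, rfl⟩
  have hA0 : 0 < A := by linarith
  rw [← hA] at key
  have h5 := key (A / (2 * (A + B))) (by positivity) (by rw [div_lt_one (by positivity)]; linarith)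
  rw [div_mul_eq_mul_div, le_div_iff₀ (by positivity)] at h5
  nlinarith [mul_pos hA0 hA0, mul_nonneg hA0.le hB]

theorem statement7
    {Y : Type*}
    [NormedAddCommGroup Y] [InnerProductSpace ℝ Y] [CompleteSpace Y]
    (h : Y → EReal)
    (hh_bot : ∀ u : Y, h u ≠ ⊥) (hh_top : ∃ u : Y, h u ≠ ⊤)
    (hh_lsc : LowerSemicontinuous h)
    (hh_cvx : ∀ u v : Y, ∀ a b : ℝ, 0 ≤ a → 0 ≤ b → a + b = 1 →
      h (a • u + b • v) ≤ (a : EReal) * h u + (b : EReal) * h v)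
    (γ : ℕ → ℝ) (hγ : ∀ k : ℕ, 0 < γ k) (ε : ℕ → ℝ) (hε : ∀ k : ℕ, 0 ≤ ε k)
    (lam lamstar sstar ss : ℕ → Y)
    (hmin : ∀ (k : ℕ) (μ : Y),
      h (lamstar (k+1)) + ((‖lam k - lamstar (k+1)‖ ^ 2 / (2 * γ k) : ℝ) : EReal)
        ≤ h μ + ((‖lam k - μ‖ ^ 2 / (2 * γ k) : ℝ) : EReal))
    (hsstar : ∀ k : ℕ, sstar (k+1) = (γ k)⁻¹ • (lam k - lamstar (k+1)))
    (herr : ∀ k : ℕ, ‖lam (k+1) - lamstar (k+1)‖ ≤ ε (k+1))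
    (hss : ∀ k : ℕ, ss (k+1) = (γ k)⁻¹ • (lam k - lam (k+1)))
    (sbar : Y)
    (hsbar_mem : sbar ∈ closure {v : Y | ∃ u : Y, v ∈ subdiff h u})
    (hsbar_min : ∀ v ∈ closure {v : Y | ∃ u : Y, v ∈ subdiff h u}, ‖sbar‖ ≤ ‖v‖)
    (Ms : ℝ) (hMs_star : ∀ k : ℕ, 1 ≤ k → ‖sstar k‖ ≤ Ms) (hMs_bar : ‖sbar‖ ≤ Ms) :
    ∀ k : ℕ, 1 ≤ k →
      h (lamstar (k+1)) - ((⟪lamstar (k+1), sbar⟫ : ℝ) : EReal)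
        ≤ h (lamstar k) - ((⟪lamstar k, sbar⟫ : ℝ) : EReal)
            + ((2 * Ms * ε k : ℝ) : EReal) := by
  intro k hk
  obtain ⟨j, rfl⟩ : ∃ j, k = j + 1 := ⟨k - 1, by omega⟩
  obtain ⟨hq, -⟩ := prox_mem_subdiff h hh_bot hh_top hh_cvx _ (hγ j) _ _ (hmin j)
  obtain ⟨hp, hs⟩ := prox_mem_subdiff h hh_bot hh_top hh_cvx _ (hγ (j+1)) _ _ (hmin (j+1))
  rw [← hsstar (j+1)] at hs
  have hM := hMs_star (j+1+1) (by omega)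
  have hle := hsbar_min _ (subset_closure ⟨_, hs⟩)
  have hsub := hs (lamstar (j+1))
  have hd : lamstar (j+1) - lamstar (j+1+1)
      = (lamstar (j+1) - lam (j+1)) + γ (j+1) • sstar (j+1+1) := by
    rw [hsstar (j+1), smul_inv_smul₀ (hγ (j+1)).ne']; abel
  have he := herr j
  have hg := hγ (j+1)
  have he0 := hε (j+1)
  generalize sstar (j+1+1) = s at *
  generalize hP : lamstar (j+1+1) = p at *
  generalize hQ : lamstar (j+1) = q at *
  generalize lam (j+1) = x at *
  obtain ⟨a, ha⟩ : ∃ a : ℝ, h p = a := ⟨(h p).toReal, (EReal.coe_toReal hp (hh_bot p)).symm⟩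
  obtain ⟨b, hb⟩ : ∃ b : ℝ, h q = b := ⟨(h q).toReal, (EReal.coe_toReal hq (hh_bot q)).symm⟩
  rw [ha, hb] at hsub ⊢
  norm_cast at hsub ⊢
  have h1 : ⟪sbar - s, s⟫ ≤ 0 := by
    rw [inner_sub_left, real_inner_self_eq_norm_sq]
    nlinarith [real_inner_le_norm sbar s, norm_nonneg s, norm_nonneg sbar]
  have h2 : ⟪sbar - s, q - x⟫ ≤ 2 * Ms * ε (j+1) := by
    refine (real_inner_le_norm _ _).trans ?_
    have := norm_sub_le sbar s
    rw [norm_sub_rev q x]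
    exact mul_le_mul (by linarith) he (norm_nonneg _) (by linarith [norm_nonneg s])
  have h3 : ⟪sbar - s, q - p⟫ ≤ 2 * Ms * ε (j+1) := by
    rw [hd, inner_add_right, inner_smul_right]
    nlinarith
  rw [inner_sub_left, inner_sub_right sbar, real_inner_comm q sbar, real_inner_comm p sbar] at h3
  linarith
end
end

section
/- For an IPPA sequence on a proper, convex, lower semicontinuous function h with errors and step sizes satisfying (A1)–(A5): if h*(s̄) < ∞, then the vertical distance to the asymptotic supporting plane of slope s̄ vanishes, i.e. h(λ⋆^k) + h*(s̄) − ⟨λ⋆^k, s̄⟩ → 0; if moreover s̄ belongs to range ∂h (equivalently, h* is subdifferentiable at s̄), then h(λ⋆^k) + h*(s̄) − ⟨λ⋆^k, s̄⟩ = O(1/√(∑_{i=0}^{k−1} γ_i)). -/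
open scoped RealInnerProductSpace
open Filter Asymptotics

noncomputable section

section aux

variable {Y : Type*} [NormedAddCommGroup Y] [InnerProductSpace ℝ Y]

lemma aux_conv (h : Y → EReal)
    (hh_cvx : ∀ u v : Y, ∀ a b : ℝ, 0 ≤ a → 0 ≤ b → a + b = 1 →
      h (a • u + b • v) ≤ (a : EReal) * h u + (b : EReal) * h v)
    {u v : Y} {x y : ℝ} (hu : h u = x) (hv : h v = y) (t : ℝ) (h0 : 0 ≤ t) (h1 : t ≤ 1) :
    h (u + t • (v - u)) ≤ (((1 - t) * x + t * y : ℝ) : EReal) := by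
  have := hh_cvx u v (1 - t) t (by linarith) h0 (by ring)
  rw [hu, hv] at this
  have e : u + t • (v - u) = (1 - t) • u + t • v := by
    rw [smul_sub, sub_smul, one_smul]; abel
  rw [e]
  exact_mod_cast this

lemma aux_real {Y : Type*} {h : Y → EReal} (hh_bot : ∀ u : Y, h u ≠ ⊥) {u : Y} (hu : h u ≠ ⊤) :
    ∃ x : ℝ, h u = x :=
  ⟨(h u).toReal, (EReal.coe_toReal hu (hh_bot u)).symm⟩

lemma aux_min (h : Y → EReal)
    (hh_bot : ∀ u : Y, h u ≠ ⊥) (hh_top : ∃ u : Y, h u ≠ ⊤)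
    (hh_cvx : ∀ u v : Y, ∀ a b : ℝ, 0 ≤ a → 0 ≤ b → a + b = 1 →
      h (a • u + b • v) ≤ (a : EReal) * h u + (b : EReal) * h v)
    (c l : Y) (γ : ℝ) (hγ : 0 < γ)
    (hmin : ∀ (μ : Y),
      h l + ((‖c - l‖ ^ 2 / (2 * γ) : ℝ) : EReal)
        ≤ h μ + ((‖c - μ‖ ^ 2 / (2 * γ) : ℝ) : EReal)) :
    h l ≠ ⊤ ∧ γ⁻¹ • (c - l) ∈ subdiff h l := by
  have hl : h l ≠ ⊤ := by
    obtain ⟨u, hu⟩ := hh_top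
    obtain ⟨x, hx⟩ := aux_real hh_bot hu
    intro hl
    have := hmin u
    rw [hx, hl, EReal.top_add_coe, ← EReal.coe_add] at this
    exact absurd (top_le_iff.1 this) (EReal.coe_ne_top _)
  refine ⟨hl, fun w => ?_⟩
  obtain ⟨x, hx⟩ := aux_real hh_bot hl
  by_cases hw : h w = ⊤
  · rw [hw]; exact le_top
  obtain ⟨y, hy⟩ := aux_real hh_bot hw
  rw [hx, hy, ← EReal.coe_add, EReal.coe_le_coe_iff, real_inner_smul_left]
  have key : ∀ t : ℝ, 0 < t → t ≤ 1 →
      x + γ⁻¹ * ⟪c - l, w - l⟫ ≤ y + t * (‖w - l‖ ^ 2 / (2 * γ)) := by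
    intro t ht ht1
    have h1 := (hmin (l + t • (w - l))).trans
      (add_le_add_left (aux_conv h hh_cvx hx hy t ht.le ht1) _)
    rw [hx, ← EReal.coe_add, ← EReal.coe_add, EReal.coe_le_coe_iff] at h1
    have e : ‖c - (l + t • (w - l))‖ ^ 2
        = ‖c - l‖ ^ 2 - 2 * (t * ⟪c - l, w - l⟫) + t ^ 2 * ‖w - l‖ ^ 2 := by
      rw [← sub_sub, norm_sub_sq_real, real_inner_smul_right, norm_smul, mul_pow,
        Real.norm_eq_abs, sq_abs]
    rw [e] at h1
    have e2 : (‖c - l‖ ^ 2 - 2 * (t * ⟪c - l, w - l⟫) + t ^ 2 * ‖w - l‖ ^ 2) / (2 * γ)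
        = ‖c - l‖ ^ 2 / (2 * γ) - t * (γ⁻¹ * ⟪c - l, w - l⟫)
          + t * (t * (‖w - l‖ ^ 2 / (2 * γ))) := by
      field_simp
    rw [e2] at h1
    have h2 : t * (x + γ⁻¹ * ⟪c - l, w - l⟫) ≤ t * (y + t * (‖w - l‖ ^ 2 / (2 * γ))) := by
      linarith
    exact le_of_mul_le_mul_left h2 ht
  have lim : Tendsto (fun t : ℝ => y + t * (‖w - l‖ ^ 2 / (2 * γ))) (nhdsWithin 0 (Set.Ioi 0))
      (nhds (y + 0 * (‖w - l‖ ^ 2 / (2 * γ)))) := by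
    apply Tendsto.mono_left _ nhdsWithin_le_nhds
    apply Continuous.tendsto (by fun_prop)
  have := ge_of_tendsto lim (b := x + γ⁻¹ * ⟪c - l, w - l⟫) (by
    filter_upwards [Ioc_mem_nhdsGT (zero_lt_one' ℝ)] with t ht using key t ht.1 ht.2)
  linarith

lemma aux_prox_exists [CompleteSpace Y] (h : Y → EReal)
    (hh_bot : ∀ u : Y, h u ≠ ⊥) (hh_top : ∃ u : Y, h u ≠ ⊤)
    (hh_lsc : LowerSemicontinuous h)
    (hh_cvx : ∀ u v : Y, ∀ a b : ℝ, 0 ≤ a → 0 ≤ b → a + b = 1 →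
      h (a • u + b • v) ≤ (a : EReal) * h u + (b : EReal) * h v)
    (c : Y) (γ B : ℝ) (hγ : 0 < γ)
    (hB : ∀ (l : Y) (x : ℝ), h l = x → B ≤ x + ‖c - l‖ ^ 2 / (2 * γ)) :
    ∃ l, ∀ μ, h l + ((‖c - l‖ ^ 2 / (2 * γ) : ℝ) : EReal)
        ≤ h μ + ((‖c - μ‖ ^ 2 / (2 * γ) : ℝ) : EReal) := by
  set S : Set ℝ := {q | ∃ (l : Y) (x : ℝ), h l = x ∧ q = x + ‖c - l‖ ^ 2 / (2 * γ)} with hS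
  have hSne : S.Nonempty := by
    obtain ⟨u, hu⟩ := hh_top
    obtain ⟨x, hx⟩ := aux_real hh_bot hu
    exact ⟨_, u, x, hx, rfl⟩
  have hSb : BddBelow S := ⟨B, by rintro q ⟨l, x, hx, rfl⟩; exact hB l x hx⟩
  set m := sInf S with hm
  have hmle : ∀ (l : Y) (x : ℝ), h l = x → m ≤ x + ‖c - l‖ ^ 2 / (2 * γ) :=
    fun l x hx => csInf_le hSb ⟨l, x, hx, rfl⟩
  have hseq : ∀ n : ℕ, ∃ (l : Y) (x : ℝ), h l = x ∧
      x + ‖c - l‖ ^ 2 / (2 * γ) < m + 1 / ((n : ℝ) + 1) := by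
    intro n
    obtain ⟨q, ⟨l, x, hx, rfl⟩, hq⟩ := exists_lt_of_csInf_lt hSne
      (show sInf S < m + 1 / ((n : ℝ) + 1) by
        have : 0 < 1 / ((n : ℝ) + 1) := Nat.one_div_pos_of_nat
        linarith)
    exact ⟨l, x, hx, hq⟩
  choose l x hx hlt using hseq
  have hdist : ∀ i j : ℕ, ‖l i - l j‖ ^ 2 ≤ 4 * γ * (1 / ((i : ℝ) + 1) + 1 / ((j : ℝ) + 1)) := by
    intro i j
    have h1 := aux_conv h hh_cvx (hx i) (hx j) (1/2) (by norm_num) (by norm_num)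
    have h2 : h (l i + (1/2 : ℝ) • (l j - l i)) ≠ ⊤ := ne_top_of_le_ne_top (EReal.coe_ne_top _) h1
    obtain ⟨z, hz⟩ := aux_real hh_bot h2
    have h3 := hmle _ _ hz
    rw [hz, EReal.coe_le_coe_iff] at h1
    have e : ‖c - (l i + (1/2 : ℝ) • (l j - l i))‖ ^ 2
        = ‖c - l i‖ ^ 2 / 2 + ‖c - l j‖ ^ 2 / 2 - ‖l i - l j‖ ^ 2 / 4 := by
      have e1 : c - (l i + (1/2 : ℝ) • (l j - l i)) = (1/2 : ℝ) • ((c - l i) + (c - l j)) := by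
        module
      have e2 : l i - l j = (c - l j) - (c - l i) := by abel
      have := parallelogram_law_with_norm ℝ (c - l j) (c - l i)
      rw [← e2] at this
      rw [e1, norm_smul, mul_pow, add_comm (c - l i)]
      rw [show ‖(1/2 : ℝ)‖ = 1/2 by norm_num]
      linarith
    rw [e] at h3
    have e2 : (‖c - l i‖ ^ 2 / 2 + ‖c - l j‖ ^ 2 / 2 - ‖l i - l j‖ ^ 2 / 4) / (2 * γ)
      = (‖c - l i‖ ^ 2 / (2 * γ)) / 2 + (‖c - l j‖ ^ 2 / (2 * γ)) / 2
        - ‖l i - l j‖ ^ 2 / (8 * γ) := by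
      field_simp
      ring
    rw [e2] at h3
    have h4 : ‖l i - l j‖ ^ 2 / (8 * γ) ≤ (1 / ((i : ℝ) + 1) + 1 / ((j : ℝ) + 1)) / 2 := by
      linarith [hlt i, hlt j]
    rw [div_le_iff₀ (by positivity)] at h4
    linarith
  have hcau : CauchySeq l := by
    rw [Metric.cauchySeq_iff']
    intro e he
    obtain ⟨N, hN⟩ := exists_nat_one_div_lt (show (0:ℝ) < e ^ 2 / (8 * γ) by positivity)
    refine ⟨N, fun n hn => ?_⟩
    rw [dist_eq_norm]
    have h1 := hdist n N
    have h2 : 1 / ((n : ℝ) + 1) ≤ 1 / ((N : ℝ) + 1) := by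
      gcongr
    rw [lt_div_iff₀ (by positivity)] at hN
    have h3 : ‖l n - l N‖ ^ 2 < e ^ 2 := by
      have : 4 * γ * (1 / ((n : ℝ) + 1) + 1 / ((N : ℝ) + 1)) ≤
        4 * γ * (1 / ((N : ℝ) + 1) + 1 / ((N : ℝ) + 1)) := by gcongr
      linarith
    exact lt_of_pow_lt_pow_left₀ 2 he.le h3
  obtain ⟨p, hp⟩ := cauchySeq_tendsto_of_complete hcau
  have hple : h p ≤ ((m - ‖c - p‖ ^ 2 / (2 * γ) : ℝ) : EReal) := by
    refine EReal.le_of_forall_lt_iff_le.1 ?_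
    intro y hy
    by_contra hcon
    rw [not_le] at hcon
    have h1 : ∀ᶠ n in atTop, (y : EReal) < h (l n) := hp.eventually (hh_lsc p y hcon)
    have lim : Tendsto (fun n : ℕ => m + 1 / ((n : ℝ) + 1) - ‖c - l n‖ ^ 2 / (2 * γ)) atTop
        (nhds (m + 0 - ‖c - p‖ ^ 2 / (2 * γ))) := by
      refine (tendsto_const_nhds.add tendsto_one_div_add_atTop_nhds_zero_nat).sub ?_
      exact (((tendsto_const_nhds.sub hp).norm).pow 2).div_const _
    have h2 := ge_of_tendsto lim (b := y) (by
      filter_upwards [h1] with n hn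
      rw [hx n, EReal.coe_lt_coe_iff] at hn
      linarith [hlt n])
    rw [EReal.coe_lt_coe_iff] at hy
    linarith
  refine ⟨p, fun μ => ?_⟩
  by_cases hμ : h μ = ⊤
  · rw [hμ, EReal.top_add_coe]; exact le_top
  obtain ⟨y, hy⟩ := aux_real hh_bot hμ
  refine (add_le_add_left hple _).trans ?_
  rw [hy, ← EReal.coe_add, ← EReal.coe_add, EReal.coe_le_coe_iff]
  linarith [hmle μ y hy]

/-- Points of the domain of the conjugate lie in the closure of the range of the subdifferential. -/
lemma aux_dom_closure [CompleteSpace Y] (h : Y → EReal)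
    (hh_bot : ∀ u : Y, h u ≠ ⊥) (hh_top : ∃ u : Y, h u ≠ ⊤)
    (hh_lsc : LowerSemicontinuous h)
    (hh_cvx : ∀ u v : Y, ∀ a b : ℝ, 0 ≤ a → 0 ≤ b → a + b = 1 →
      h (a • u + b • v) ≤ (a : EReal) * h u + (b : EReal) * h v)
    (s : Y) (C : ℝ) (hC : ∀ (l : Y) (x : ℝ), h l = x → ⟪s, l⟫ - x ≤ C) :
    s ∈ closure {v : Y | ∃ u : Y, v ∈ subdiff h u} := by
  obtain ⟨u, hu⟩ := id hh_top
  obtain ⟨x, hx⟩ := aux_real hh_bot hu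
  set K : ℝ := 2 * (x - ⟪s, u⟫ + C) with hK
  have hK0 : 0 ≤ K := by have := hC u x hx; linarith
  -- for each `γ > 0` a point in the range at squared distance `K / γ + ‖u‖ ^ 2 / γ ^ 2`
  have key : ∀ γ : ℝ, 0 < γ → ∃ v : Y, (∃ u : Y, v ∈ subdiff h u) ∧
      ‖s - v‖ ^ 2 ≤ (K + ‖u‖ ^ 2 / γ) / γ := by
    intro γ hγ
    have hex : ∀ l : Y, ‖γ • s - l‖ ^ 2 / (2 * γ)
        = γ * ‖s‖ ^ 2 / 2 - ⟪s, l⟫ + ‖l‖ ^ 2 / (2 * γ) := by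
      intro l
      rw [norm_sub_sq_real, norm_smul, real_inner_smul_left, mul_pow, Real.norm_eq_abs, sq_abs]
      field_simp
    obtain ⟨l, hl⟩ := aux_prox_exists h hh_bot hh_top hh_lsc hh_cvx (γ • s) γ
      (γ * ‖s‖ ^ 2 / 2 - C) hγ (by
        intro l x hx
        rw [hex]
        have := hC l x hx
        have : 0 ≤ ‖l‖ ^ 2 / (2 * γ) := by positivity
        linarith)
    obtain ⟨hlt, hsub⟩ := aux_min h hh_bot hh_top hh_cvx _ l γ hγ hl
    refine ⟨_, ⟨l, hsub⟩, ?_⟩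
    obtain ⟨y, hy⟩ := aux_real hh_bot hlt
    have h1 := hl u
    rw [hx, hy, ← EReal.coe_add, ← EReal.coe_add, EReal.coe_le_coe_iff, hex, hex] at h1
    have h2 := hC l y hy
    have e : s - γ⁻¹ • (γ • s - l) = γ⁻¹ • l := by
      rw [smul_sub, smul_smul, inv_mul_cancel₀ hγ.ne', one_smul]; abel
    rw [e, norm_smul, mul_pow, Real.norm_eq_abs, sq_abs]
    have h3 : ‖l‖ ^ 2 / (2 * γ) ≤ (K + ‖u‖ ^ 2 / γ) / 2 := by
      have : ‖u‖ ^ 2 / γ / 2 = ‖u‖ ^ 2 / (2 * γ) := by field_simp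
      rw [add_div, this, hK]; linarith
    have h4 : γ⁻¹ ^ 2 * ‖l‖ ^ 2 = 2 * (‖l‖ ^ 2 / (2 * γ)) / γ := by field_simp
    rw [h4]
    gcongr
    linarith
  rw [Metric.mem_closure_iff]
  intro e he
  have lim : Tendsto (fun γ : ℝ => (K + ‖u‖ ^ 2 / γ) / γ) atTop (nhds 0) :=
    (tendsto_const_nhds.add (tendsto_const_nhds.div_atTop tendsto_id)).div_atTop tendsto_id
  obtain ⟨γ, h1, h2⟩ := ((lim.eventually (gt_mem_nhds (show (0:ℝ) < e ^ 2 by positivity))).and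
    (eventually_gt_atTop 0)).exists
  obtain ⟨v, hv, hd⟩ := key γ h2
  refine ⟨v, hv, ?_⟩
  rw [dist_eq_norm]
  exact lt_of_pow_lt_pow_left₀ 2 he.le (hd.trans_lt h1)

lemma aux_sub_ne_top {h : Y → EReal} (hh_top : ∃ u : Y, h u ≠ ⊤) {l v : Y}
    (hv : v ∈ subdiff h l) : h l ≠ ⊤ := by
  obtain ⟨u, hu⟩ := hh_top
  intro hl
  have := hv u
  rw [hl, EReal.top_add_coe] at this
  exact hu (top_le_iff.1 this)

lemma aux_sub_real {h : Y → EReal} {l v w : Y} {x y : ℝ}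
    (hv : v ∈ subdiff h l) (hx : h l = x) (hy : h w = y) : x + ⟪v, w - l⟫ ≤ y := by
  have := hv w
  rw [hx, hy] at this
  exact_mod_cast this

/-- Variational inequality for the minimal-norm element. -/
lemma aux_proj [CompleteSpace Y] (h : Y → EReal)
    (hh_bot : ∀ u : Y, h u ≠ ⊥) (hh_top : ∃ u : Y, h u ≠ ⊤)
    (hh_lsc : LowerSemicontinuous h)
    (hh_cvx : ∀ u v : Y, ∀ a b : ℝ, 0 ≤ a → 0 ≤ b → a + b = 1 →
      h (a • u + b • v) ≤ (a : EReal) * h u + (b : EReal) * h v)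
    (sbar : Y)
    (hsbar_mem : sbar ∈ closure {v : Y | ∃ u : Y, v ∈ subdiff h u})
    (hsbar_min : ∀ v ∈ closure {v : Y | ∃ u : Y, v ∈ subdiff h u}, ‖sbar‖ ≤ ‖v‖)
    (v l : Y) (hv : v ∈ subdiff h l) : 0 ≤ ⟪v - sbar, sbar⟫ := by
  obtain ⟨x, hx⟩ := aux_real hh_bot (aux_sub_ne_top hh_top hv)
  have h1 : ∀ t : ℝ, 0 < t → t ≤ 1 → ‖sbar‖ ≤ ‖sbar + t • (v - sbar)‖ := by
    intro t ht ht1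
    apply hsbar_min
    have hcl : closure {v : Y | ∃ u : Y, v ∈ subdiff h u} ⊆
        (fun s => s + t • (v - s)) ⁻¹' (closure {v : Y | ∃ u : Y, v ∈ subdiff h u}) := by
      refine closure_minimal ?_ (isClosed_closure.preimage (by fun_prop))
      rintro s ⟨p, hp⟩
      obtain ⟨y, hy⟩ := aux_real hh_bot (aux_sub_ne_top hh_top hp)
      refine aux_dom_closure h hh_bot hh_top hh_lsc hh_cvx _
        ((1 - t) * (⟪s, p⟫ - y) + t * (⟪v, l⟫ - x)) ?_
      intro w z hz
      have a1 := aux_sub_real hp hy hz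
      have a2 := aux_sub_real hv hx hz
      rw [inner_sub_right] at a1 a2
      rw [inner_add_left, real_inner_smul_left, inner_sub_left]
      nlinarith [mul_le_mul_of_nonneg_left a1 (sub_nonneg.2 ht1),
        mul_le_mul_of_nonneg_left a2 ht.le]
    exact hcl hsbar_mem
  have key : ∀ t : ℝ, 0 < t → t ≤ 1 → 0 ≤ 2 * ⟪v - sbar, sbar⟫ + t * ‖v - sbar‖ ^ 2 := by
    intro t ht ht1
    have h2 := pow_le_pow_left₀ (norm_nonneg _) (h1 t ht ht1) 2
    rw [norm_add_sq_real, real_inner_smul_right, norm_smul, mul_pow, Real.norm_eq_abs,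
      sq_abs, real_inner_comm] at h2
    have : 0 ≤ t * (2 * ⟪v - sbar, sbar⟫ + t * ‖v - sbar‖ ^ 2) := by nlinarith
    exact nonneg_of_mul_nonneg_right this ht
  have lim : Tendsto (fun t : ℝ => 2 * ⟪v - sbar, sbar⟫ + t * ‖v - sbar‖ ^ 2)
      (nhdsWithin 0 (Set.Ioi 0)) (nhds (2 * ⟪v - sbar, sbar⟫ + 0 * ‖v - sbar‖ ^ 2)) := by
    apply Tendsto.mono_left _ nhdsWithin_le_nhds
    apply Continuous.tendsto (by fun_prop)
  have := ge_of_tendsto lim (b := 0) (by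
    filter_upwards [Ioc_mem_nhdsGT (zero_lt_one' ℝ)] with t ht using key t ht.1 ht.2)
  linarith

lemma aux_sqrt_step {A E x g : ℝ} (hA : 0 ≤ A) (hE : 0 ≤ E) (hg : 0 ≤ g)
    (hx : x ^ 2 ≤ (√A + E) ^ 2 + g) : x ≤ √(A + g) + E := by
  have h1 : √A ≤ √(A + g) := Real.sqrt_le_sqrt (by linarith)
  have h2 := Real.sq_sqrt hA
  have h3 := Real.sq_sqrt (add_nonneg hA hg)
  have h4 := Real.sqrt_nonneg (A + g)
  refine (abs_le_of_sq_le_sq' ?_ (by positivity)).2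
  nlinarith [mul_le_mul_of_nonneg_right h1 hE]

lemma aux_seq (γ ε : ℕ → ℝ) (hγ : ∀ k, 0 < γ k) (hε : ∀ k, 0 ≤ ε k)
    (lam ls ss : ℕ → Y) (sbar u : Y) (F : ℕ → ℝ) (η E C : ℝ) (hη : 0 ≤ η)
    (hE : ∀ n, ∑ i ∈ Finset.range n, ε (i + 1) ≤ E)
    (hC : ∀ n, ∑ k ∈ Finset.range n, (∑ i ∈ Finset.range k, γ i) * (ε k ^ 2 / (4 * γ k)) ≤ C)
    (h1 : ∀ k, 1 ≤ k → F (k + 1) + ⟪ss (k + 1) - sbar, ls k - ls (k + 1)⟫ ≤ F k)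
    (h2 : ∀ k, 0 ≤ ⟪ss (k + 1) - sbar, sbar⟫)
    (h3 : ∀ k, F (k + 1) + ⟪ss (k + 1) - sbar, u - ls (k + 1)⟫ ≤ η)
    (h4 : ∀ k, 0 ≤ F (k + 1))
    (hs : ∀ k, ls (k + 1) = lam k - γ k • ss (k + 1))
    (herr : ∀ k, ‖lam (k + 1) - ls (k + 1)‖ ≤ ε (k + 1)) :
    ∃ K : ℝ, ∀ n, (∑ i ∈ Finset.range n, γ i) * F n
      ≤ K + 2 * η * ∑ i ∈ Finset.range n, γ i := by
  set G : ℕ → ℝ := fun n => ∑ i ∈ Finset.range n, γ i with hG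
  have hG0 : ∀ n, 0 ≤ G n := fun n => Finset.sum_nonneg fun i _ => (hγ i).le
  have hGs : ∀ n, G (n + 1) = G n + γ n := fun n => Finset.sum_range_succ _ _
  have hGm : Monotone G := monotone_nat_of_le_succ fun n => by rw [hGs]; linarith [hγ n]
  set W : ℕ → ℝ := fun n => ∑ i ∈ Finset.range n, ε (i + 1) with hW
  have hW0 : ∀ n, 0 ≤ W n := fun n => Finset.sum_nonneg fun i _ => hε _
  have hWs : ∀ n, W (n + 1) = W n + ε (n + 1) := fun n => Finset.sum_range_succ _ _
  have hE0 : 0 ≤ E := (hW0 0).trans (hE 0)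
  set d : ℕ → Y := fun n => lam n - (u - G n • sbar) with hd
  set b : ℕ → Y := fun n => ls n - (u - G n • sbar) with hb
  set D : ℝ := ‖d 0‖ with hD
  set R : ℕ → ℝ := fun n => √(D ^ 2 + 2 * η * G n) with hR
  have hR0 : ∀ n, 0 ≤ D ^ 2 + 2 * η * G n := fun n => by have := hG0 n; positivity
  -- basic step inequality
  have hstep : ∀ k, ‖b (k + 1)‖ ^ 2 ≤ ‖d k‖ ^ 2 + 2 * γ k * (η - F (k + 1)) := by
    intro k
    set g := ss (k + 1) - sbar with hg
    have e : d k = b (k + 1) + γ k • g := by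
      simp only [hd, hb, hg, hGs, hs k]; module
    have e2 : u - ls (k + 1) = -(b (k + 1)) + G (k + 1) • sbar := by
      simp only [hb]; module
    have i1 := h3 k
    rw [e2, inner_add_right, inner_neg_right, real_inner_smul_right, real_inner_comm] at i1
    have i2 := mul_nonneg (hG0 (k + 1)) (h2 k)
    rw [e, norm_add_sq_real, real_inner_smul_right]
    have i3 : F (k + 1) - η ≤ ⟪b (k + 1), g⟫ := by linarith
    have i4 := mul_le_mul_of_nonneg_left i3 (hγ k).le
    nlinarith [sq_nonneg ‖γ k • g‖]
  have htri : ∀ k, ‖d (k + 1)‖ ≤ ‖b (k + 1)‖ + ε (k + 1) := by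
    intro k
    have e : d (k + 1) = b (k + 1) + (lam (k + 1) - ls (k + 1)) := by
      simp only [hd, hb]; abel
    rw [e]
    exact (norm_add_le _ _).trans (add_le_add_right (herr k) _)
  have hbstep : ∀ k, ‖d k‖ ≤ R k + W k → ‖b (k + 1)‖ ≤ R (k + 1) + W k := by
    intro k ih
    have := aux_sqrt_step (x := ‖b (k + 1)‖) (hR0 k) (hW0 k)
      (show 0 ≤ 2 * γ k * η by have := hγ k; positivity) (by
        have i1 := pow_le_pow_left₀ (norm_nonneg _) ih 2
        have i2 := hstep k
        have i3 := mul_nonneg (hγ k).le (h4 k)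
        simp only [hR] at i1
        linarith)
    simp only [hR, hGs]
    rw [show D ^ 2 + 2 * η * (G k + γ k) = D ^ 2 + 2 * η * G k + 2 * γ k * η by ring]
    exact this
  have hdn : ∀ n, ‖d n‖ ≤ R n + W n := by
    intro n
    induction n with
    | zero =>
      have : D ≤ R 0 := by
        apply Real.le_sqrt_of_sq_le
        simp [hG]
      linarith [hW0 0]
    | succ k ih => rw [hWs]; linarith [htri k, hbstep k ih]
  have hRm : Monotone R := fun i j hij => Real.sqrt_le_sqrt (by
    have := mul_le_mul_of_nonneg_left (hGm hij) hη
    linarith)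
  have hsum : ∀ N n, n ≤ N → 2 * ∑ k ∈ Finset.range n, γ k * F (k + 1) + ‖d n‖ ^ 2
      ≤ D ^ 2 + 2 * η * G n + W n * (2 * R N + 3 * E) := by
    intro N n
    induction n with
    | zero => intro _; simp [hG, hW, hD]
    | succ k ih =>
      intro hk
      have ih := ih (by omega)
      have i1 := pow_le_pow_left₀ (norm_nonneg _) (htri k) 2
      have i2 := hstep k
      have i3 := hbstep k (hdn k)
      have i4 := hRm hk
      have i5 : ε (k + 1) ≤ E := by
        have := hE (k + 1)
        change W (k + 1) ≤ E at this
        rw [hWs] at this; linarith [hW0 k]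
      have i6 : W k ≤ E := hE k
      have i7 : 2 * ‖b (k + 1)‖ + ε (k + 1) ≤ 2 * R N + 3 * E := by linarith
      have i8 := mul_le_mul_of_nonneg_left i7 (hε (k + 1))
      rw [Finset.sum_range_succ, hGs, hWs]
      nlinarith
  have hmono : ∀ n, G n * F n ≤ ∑ k ∈ Finset.range n, G k * (ε k ^ 2 / (4 * γ k))
      + ∑ k ∈ Finset.range n, γ k * F (k + 1) := by
    intro n
    induction n with
    | zero => simp [hG]
    | succ k ih =>
      rw [Finset.sum_range_succ, Finset.sum_range_succ, hGs]
      suffices G k * F (k + 1) ≤ G k * F k + G k * (ε k ^ 2 / (4 * γ k)) by linarith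
      rcases Nat.eq_zero_or_pos k with rfl | hk
      · simp [hG]
      rw [← mul_add]
      refine mul_le_mul_of_nonneg_left ?_ (hG0 k)
      have i1 := h1 k hk
      set g := ss (k + 1) - sbar with hg
      have e : ls k - ls (k + 1) = (ls k - lam k) + γ k • g + γ k • sbar := by
        rw [hs k, hg]; module
      obtain ⟨j, rfl⟩ : ∃ j, k = j + 1 := ⟨k - 1, by omega⟩
      have i2 := herr j
      rw [norm_sub_rev] at i2
      have i3 := neg_le_of_abs_le (abs_real_inner_le_norm g (ls (j + 1) - lam (j + 1)))
      have i4 := mul_le_mul_of_nonneg_left i2 (norm_nonneg g)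
      rw [e, inner_add_right, inner_add_right, real_inner_smul_right, real_inner_smul_right,
        real_inner_self_eq_norm_sq] at i1
      have i5 := mul_nonneg (hγ (j + 1)).le (h2 (j + 1))
      have i6 : ‖g‖ * ε (j + 1) ≤ γ (j + 1) * ‖g‖ ^ 2 + ε (j + 1) ^ 2 / (4 * γ (j + 1)) := by
        have hp := hγ (j + 1)
        have : γ (j + 1) * ‖g‖ ^ 2 + ε (j + 1) ^ 2 / (4 * γ (j + 1)) - ‖g‖ * ε (j + 1)
            = (2 * γ (j + 1) * ‖g‖ - ε (j + 1)) ^ 2 / (4 * γ (j + 1)) := by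
          field_simp; ring
        have : 0 ≤ (2 * γ (j + 1) * ‖g‖ - ε (j + 1)) ^ 2 / (4 * γ (j + 1)) := by positivity
        linarith
      linarith
  refine ⟨C + D ^ 2 + 2 * E ^ 2, fun n => ?_⟩
  have j1 := hmono n
  have j2 := hsum n n le_rfl
  have j3 := hC n
  change ∑ k ∈ Finset.range n, G k * (ε k ^ 2 / (4 * γ k)) ≤ C at j3
  have j4 : W n * (2 * R n + 3 * E) ≤ E * (2 * R n + 3 * E) :=
    mul_le_mul_of_nonneg_right (hE n) (by have : 0 ≤ R n := Real.sqrt_nonneg _; positivity)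
  have j5 : R n ^ 2 = D ^ 2 + 2 * η * G n := Real.sq_sqrt (hR0 n)
  change G n * F n ≤ C + D ^ 2 + 2 * E ^ 2 + 2 * η * G n
  nlinarith [sq_nonneg (R n - E), sq_nonneg ‖d n‖]

end aux

theorem statement8
    {Y : Type*}
    [NormedAddCommGroup Y] [InnerProductSpace ℝ Y] [CompleteSpace Y]
    (h : Y → EReal)
    (hh_bot : ∀ u : Y, h u ≠ ⊥) (hh_top : ∃ u : Y, h u ≠ ⊤)
    (hh_lsc : LowerSemicontinuous h)
    (hh_cvx : ∀ u v : Y, ∀ a b : ℝ, 0 ≤ a → 0 ≤ b → a + b = 1 →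
      h (a • u + b • v) ≤ (a : EReal) * h u + (b : EReal) * h v)
    (γ : ℕ → ℝ) (hγ : ∀ k : ℕ, 0 < γ k) (ε : ℕ → ℝ) (hε : ∀ k : ℕ, 0 ≤ ε k)
    (lam lamstar sstar ss : ℕ → Y)
    (hmin : ∀ (k : ℕ) (μ : Y),
      h (lamstar (k+1)) + ((‖lam k - lamstar (k+1)‖ ^ 2 / (2 * γ k) : ℝ) : EReal)
        ≤ h μ + ((‖lam k - μ‖ ^ 2 / (2 * γ k) : ℝ) : EReal))
    (hsstar : ∀ k : ℕ, sstar (k+1) = (γ k)⁻¹ • (lam k - lamstar (k+1)))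
    (herr : ∀ k : ℕ, ‖lam (k+1) - lamstar (k+1)‖ ≤ ε (k+1))
    (hss : ∀ k : ℕ, ss (k+1) = (γ k)⁻¹ • (lam k - lam (k+1)))
    (A1 : Summable ε)
    (A2 : (fun k : ℕ => ε (k+1) / γ k * ∑ i ∈ Finset.range (k+1), γ i)
        =O[atTop] fun k : ℕ => 1 / Real.sqrt (∑ i ∈ Finset.range (k+1), γ i))
    (A3 : Summable fun k : ℕ => (ε (k+1) / γ (k+1)) ^ 2 * ∑ i ∈ Finset.range (k+1), γ i)
    (A4 : Summable fun k : ℕ => ε (k+1) / γ (k+1) * ∑ i ∈ Finset.range (k+1), γ i)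
    (A5 : Tendsto (fun n : ℕ => ∑ i ∈ Finset.range n, γ i) atTop atTop)
    (sbar : Y)
    (hsbar_mem : sbar ∈ closure {v : Y | ∃ u : Y, v ∈ subdiff h u})
    (hsbar_min : ∀ v ∈ closure {v : Y | ∃ u : Y, v ∈ subdiff h u}, ‖sbar‖ ≤ ‖v‖)
    :
    (fenchel h sbar < ⊤ →
      Tendsto
        (fun k : ℕ => h (lamstar k) + fenchel h sbar - ((⟪lamstar k, sbar⟫ : ℝ) : EReal))
        atTop (nhds 0)) ∧
    ((∃ lb : Y, sbar ∈ subdiff h lb) →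
      ∃ M : ℝ, ∀ᶠ k in atTop,
        h (lamstar k) + fenchel h sbar - ((⟪lamstar k, sbar⟫ : ℝ) : EReal)
          ≤ ((M / Real.sqrt (∑ i ∈ Finset.range k, γ i) : ℝ) : EReal)) := by
  have hsub := fun k => aux_min h hh_bot hh_top hh_cvx (lam k) (lamstar (k+1)) (γ k) (hγ k) (hmin k)
  have hreal : ∀ k, h (lamstar (k+1)) = ((h (lamstar (k+1))).toReal : EReal) := fun k =>
    (EReal.coe_toReal (hsub k).1 (hh_bot _)).symm
  have hs : ∀ k, lamstar (k+1) = lam k - γ k • sstar (k+1) := by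
    intro k
    rw [hsstar, smul_smul, mul_inv_cancel₀ (hγ k).ne', one_smul]; abel
  have hsd : ∀ k, sstar (k+1) ∈ subdiff h (lamstar (k+1)) := by
    intro k; rw [hsstar]; exact (hsub k).2
  have hproj : ∀ k, 0 ≤ ⟪sstar (k+1) - sbar, sbar⟫ := fun k =>
    aux_proj h hh_bot hh_top hh_lsc hh_cvx sbar hsbar_mem hsbar_min _ _ (hsd k)
  have hG0 : ∀ n, 0 ≤ ∑ i ∈ Finset.range n, γ i := fun n =>
    Finset.sum_nonneg fun i _ => (hγ i).le
  -- error sums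
  have hE : ∀ n, ∑ i ∈ Finset.range n, ε (i + 1) ≤ ∑' i, ε (i + 1) := fun n =>
    ((summable_nat_add_iff 1).2 A1).sum_le_tsum _ (fun i _ => hε _)
  obtain ⟨C, hC⟩ : ∃ C, ∀ n, ∑ k ∈ Finset.range n,
      (∑ i ∈ Finset.range k, γ i) * (ε k ^ 2 / (4 * γ k)) ≤ C := by
    have hterm : ∀ k, 0 ≤ (∑ i ∈ Finset.range k, γ i) * (ε k ^ 2 / (4 * γ k)) := by
      intro k
      have := hγ k
      have := hG0 k
      positivity
    have hsm : Summable fun k : ℕ =>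
        (∑ i ∈ Finset.range k, γ i) * (ε k ^ 2 / (4 * γ k)) := by
      rw [← summable_nat_add_iff 1]
      refine Summable.of_nonneg_of_le (fun k => hterm _) (fun k => ?_)
        (A4.mul_left (∑' i, ε i))
      have i1 : ε (k+1) ≤ ∑' i, ε i := A1.le_tsum _ (fun j _ => hε j)
      have i2 : (∑ i ∈ Finset.range (k+1), γ i) * (ε (k+1) ^ 2 / (4 * γ (k+1)))
          = (ε (k+1) / 4) * (ε (k+1) / γ (k+1) * ∑ i ∈ Finset.range (k+1), γ i) := by
        have := (hγ (k+1)).ne'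
        field_simp
      rw [i2]
      refine mul_le_mul_of_nonneg_right (by linarith [hε (k+1)]) ?_
      exact mul_nonneg (div_nonneg (hε _) (hγ _).le) (hG0 _)
    exact ⟨_, fun n => hsm.sum_le_tsum _ (fun i _ => hterm i)⟩
  -- the main estimate
  have main : ∀ H : ℝ, fenchel h sbar = H → ∀ η : ℝ, 0 ≤ η →
      ∀ (u : Y) (x : ℝ), h u = x → x + H - ⟪u, sbar⟫ ≤ η →
      ∃ K : ℝ, ∀ n, (∑ i ∈ Finset.range n, γ i) *
        ((h (lamstar n)).toReal + H - ⟪lamstar n, sbar⟫)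
          ≤ K + 2 * η * ∑ i ∈ Finset.range n, γ i := by
    intro H hH η hη u x hx hu
    have hF : ∀ (l : Y) (y : ℝ), h l = y → 0 ≤ y + H - ⟪l, sbar⟫ := by
      intro l y hy
      have : ((⟪sbar, l⟫ : ℝ) : EReal) - h l ≤ fenchel h sbar :=
        le_iSup (fun l : Y => ((⟪sbar, l⟫ : ℝ) : EReal) - h l) l
      rw [hH, hy, ← EReal.coe_sub, EReal.coe_le_coe_iff, real_inner_comm] at this
      linarith
    refine aux_seq γ ε hγ hε lam lamstar sstar sbar u
      (fun n => (h (lamstar n)).toReal + H - ⟪lamstar n, sbar⟫) η _ C hη hE hC ?_ hproj ?_ ?_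
      hs herr
    · intro k hk
      obtain ⟨j, rfl⟩ : ∃ j, k = j + 1 := ⟨k - 1, by omega⟩
      have := aux_sub_real (hsd (j+1)) (hreal (j+1)) (hreal j)
      rw [inner_sub_left, inner_sub_right sbar, real_inner_comm (lamstar (j+1)) sbar,
        real_inner_comm (lamstar (j+1+1)) sbar]
      linarith
    · intro k
      have := aux_sub_real (hsd k) (hreal k) hx
      rw [inner_sub_left, inner_sub_right sbar, real_inner_comm u sbar,
        real_inner_comm (lamstar (k+1)) sbar]
      linarith
    · exact fun k => hF _ _ (hreal k)
  have hcoe : ∀ H : ℝ, fenchel h sbar = H → ∀ k,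
      h (lamstar (k+1)) + fenchel h sbar - ((⟪lamstar (k+1), sbar⟫ : ℝ) : EReal)
        = (((h (lamstar (k+1))).toReal + H - ⟪lamstar (k+1), sbar⟫ : ℝ) : EReal) := by
    intro H hH k
    rw [hH, EReal.coe_sub, EReal.coe_add, ← hreal k]
  have hlow : ∀ (l : Y), ((⟪sbar, l⟫ : ℝ) : EReal) - h l ≤ fenchel h sbar := fun l =>
    le_iSup (fun l : Y => ((⟪sbar, l⟫ : ℝ) : EReal) - h l) l
  constructor
  · intro hfin
    obtain ⟨u₀, hu₀⟩ := id hh_top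
    obtain ⟨x₀, hx₀⟩ := aux_real hh_bot hu₀
    have hnb : fenchel h sbar ≠ ⊥ := by
      intro hb
      have := hlow u₀
      rw [hb, hx₀, ← EReal.coe_sub] at this
      exact EReal.coe_ne_bot _ (le_bot_iff.1 this)
    obtain ⟨H, hH⟩ : ∃ H : ℝ, fenchel h sbar = H :=
      ⟨_, (EReal.coe_toReal hfin.ne hnb).symm⟩
    have hF0 : ∀ k, 0 ≤ (h (lamstar (k+1))).toReal + H - ⟪lamstar (k+1), sbar⟫ := by
      intro k
      have := hlow (lamstar (k+1))
      rw [hH, hreal k, ← EReal.coe_sub, EReal.coe_le_coe_iff, real_inner_comm] at this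
      linarith
    have hreallim : Tendsto (fun k : ℕ =>
        (h (lamstar (k+1))).toReal + H - ⟪lamstar (k+1), sbar⟫) atTop (nhds 0) := by
      rw [Metric.tendsto_atTop']
      intro e he
      have hlt : ((H - e / 4 : ℝ) : EReal) < fenchel h sbar := by
        rw [hH, EReal.coe_lt_coe_iff]; linarith
      obtain ⟨u, hu⟩ := lt_iSup_iff.1 hlt
      have hut : h u ≠ ⊤ := by
        intro ht
        rw [ht, EReal.sub_top] at hu
        exact not_lt_bot hu
      obtain ⟨x, hx⟩ := aux_real hh_bot hut
      rw [hx, ← EReal.coe_sub, EReal.coe_lt_coe_iff, real_inner_comm] at hu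
      obtain ⟨K, hK⟩ := main H hH (e / 4) (by positivity) u x hx (by linarith)
      have hev := A5.eventually_gt_atTop (max 0 (2 * K / e))
      obtain ⟨N, hN⟩ := eventually_atTop.1 hev
      refine ⟨N, fun n hn => ?_⟩
      have i1 := hN (n+1) (by omega)
      have i2 := hK (n+1)
      have i3 := hF0 n
      set G := ∑ i ∈ Finset.range (n+1), γ i
      have i4 : 0 < G := (le_max_left _ _).trans_lt i1
      have i5 : 2 * K / e < G := (le_max_right _ _).trans_lt i1
      rw [div_lt_iff₀ he] at i5
      rw [Real.dist_eq, sub_zero, abs_of_nonneg i3]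
      refine lt_of_mul_lt_mul_left (a := G) ?_ i4.le
      linarith
    rw [← tendsto_add_atTop_iff_nat 1]
    simp only [hcoe H hH]
    exact_mod_cast (continuous_coe_real_ereal.tendsto 0).comp hreallim
  · rintro ⟨lb, hlb⟩
    obtain ⟨x, hx⟩ := aux_real hh_bot (aux_sub_ne_top hh_top hlb)
    have hH : fenchel h sbar = ((⟪sbar, lb⟫ - x : ℝ) : EReal) := by
      apply le_antisymm
      · refine iSup_le fun l => ?_
        by_cases hl : h l = ⊤
        · rw [hl, EReal.sub_top]; exact bot_le
        obtain ⟨y, hy⟩ := aux_real hh_bot hl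
        have := aux_sub_real hlb hx hy
        rw [inner_sub_right] at this
        rw [hy, ← EReal.coe_sub, EReal.coe_le_coe_iff]
        linarith
      · have := hlow lb
        rwa [hx, ← EReal.coe_sub] at this
    obtain ⟨K, hK⟩ := main _ hH 0 le_rfl lb x hx (by rw [real_inner_comm]; linarith)
    refine ⟨max K 0, ?_⟩
    filter_upwards [A5.eventually_ge_atTop 1, eventually_ge_atTop 1] with n hn hn1
    obtain ⟨k, rfl⟩ : ∃ k, n = k + 1 := ⟨n - 1, by omega⟩
    rw [hcoe _ hH, EReal.coe_le_coe_iff]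
    have i1 := hK (k+1)
    set G := ∑ i ∈ Finset.range (k+1), γ i
    have i2 : √G ≤ G := by
      rw [Real.sqrt_le_left (by linarith)]; nlinarith
    have i3 : 0 < √G := Real.sqrt_pos.2 (by linarith)
    calc _ ≤ max K 0 / G := by
          rw [le_div_iff₀ (by linarith)]
          linarith [le_max_left K 0]
      _ ≤ max K 0 / √G := div_le_div_of_nonneg_left (le_max_right _ _) i3 i2
end
end

section
/- For an IPPA sequence on a proper, convex, lower semicontinuous function h with errors and step sizes satisfying (A1)–(A5), the conjugate values along the exact proximal subgradients converge in ℝ ∪ {+∞}: h*(s⋆^k) → h*(s̄), where s̄ is the element of minimal norm in cl(range ∂h). -/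
open scoped RealInnerProductSpace
open Filter Asymptotics

noncomputable section

section Core
variable {Y : Type*} [NormedAddCommGroup Y] [InnerProductSpace ℝ Y]

/-- Vectors at which the conjugate is finite. -/
def Pset (D : Set Y) (f : Y → ℝ) : Set Y :=
  {v | ∃ G : ℝ, ∀ w ∈ D, ⟪v, w⟫ - f w ≤ G}

lemma Pset_convex (D : Set Y) (f : Y → ℝ) : Convex ℝ (Pset D f) := by
  rintro v ⟨G, hG⟩ w ⟨G', hG'⟩ a b ha hb hab
  refine ⟨a * G + b * G', fun z hz => ?_⟩
  have h1 := mul_le_mul_of_nonneg_left (hG z hz) ha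
  have h2 := mul_le_mul_of_nonneg_left (hG' z hz) hb
  rw [inner_add_left, real_inner_smul_left, real_inner_smul_left]
  have : f z = a * f z + b * f z := by rw [← add_mul, hab, one_mul]
  linarith

lemma proj_ineq {K : Set Y} (hK : Convex ℝ K) {p : Y} (hp : p ∈ K)
    (hmin : ∀ w ∈ K, ‖p‖ ≤ ‖w‖) {w : Y} (hw : w ∈ K) : 0 ≤ ⟪w - p, p⟫ := by
  have h := (norm_eq_iInf_iff_real_inner_le_zero hK hp (u := 0)).1 ?_ w hw
  · rw [zero_sub, inner_neg_left, real_inner_comm] at h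
    linarith
  · have : Nonempty K := ⟨⟨p, hp⟩⟩
    apply le_antisymm
    · refine le_ciInf fun w => ?_
      simpa using hmin w w.2
    · exact ciInf_le ⟨0, by rintro _ ⟨w, rfl⟩; positivity⟩ (⟨p, hp⟩ : K)

variable (D : Set Y) (f : Y → ℝ) (γ e : ℕ → ℝ) (L x s : ℕ → Y)

structure Core : Prop where
  hγ : ∀ k, 0 < γ k
  he : ∀ k, 0 ≤ e k
  hx : ∀ k, x k ∈ D
  hsub : ∀ k, ∀ w ∈ D, f (x k) + ⟪s k, w - x k⟫ ≤ f w
  hstep : ∀ k, x k = L k - γ k • s k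
  herr : ∀ k, ‖L (k+1) - x k‖ ≤ e k
  hsum : Summable e
  hA4 : Summable fun k : ℕ => e k / γ (k+1) * ∑ i ∈ Finset.range (k+1), γ i
  hA5 : Tendsto (fun n : ℕ => ∑ i ∈ Finset.range n, γ i) atTop atTop

variable {D f γ e L x s}

namespace Core

lemma diff (c : Core D f γ e L x s) (k : ℕ) :
    x k - x (k+1) = γ (k+1) • s (k+1) - (L (k+1) - x k) := by
  rw [c.hstep (k+1)]; abel

lemma normstep (c : Core D f γ e L x s) (k : ℕ) :
    ‖s (k+1)‖ ≤ ‖s k‖ + 2 * (e k / γ (k+1)) := by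
  have hg := c.hγ (k+1)
  set q := (γ (k+1))⁻¹ • (L (k+1) - x k) with hq
  have hqn : ‖q‖ ≤ e k / γ (k+1) := by
    rw [hq, norm_smul, norm_inv, Real.norm_of_nonneg hg.le, div_eq_inv_mul]
    exact mul_le_mul_of_nonneg_left (c.herr k) (by positivity)
  have hd : x k - x (k+1) = γ (k+1) • (s (k+1) - q) := by
    rw [c.diff, smul_sub, hq, smul_smul, mul_inv_cancel₀ hg.ne', one_smul]
  have h1 := c.hsub k _ (c.hx (k+1))
  have h2 := c.hsub (k+1) _ (c.hx k)
  rw [← neg_sub, inner_neg_right, hd, real_inner_smul_right] at h1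
  rw [hd, real_inner_smul_right] at h2
  have h3 : 0 ≤ ⟪s k, s (k+1) - q⟫ - ⟪s (k+1), s (k+1) - q⟫ := by
    by_contra! hc
    nlinarith
  have h4 : ‖s (k+1) - q‖ ≤ ‖s k - q‖ := by
    have h5 : ‖s (k+1) - q‖ * ‖s (k+1) - q‖ ≤ ‖s k - q‖ * ‖s (k+1) - q‖ := by
      refine le_trans ?_ (real_inner_le_norm (s k - q) (s (k+1) - q))
      rw [← real_inner_self_eq_norm_mul_norm, inner_sub_left (s (k+1)), inner_sub_left (s k)]
      linarith
    by_contra! hc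
    nlinarith [norm_nonneg (s k - q)]
  have h5 : ‖s (k+1)‖ ≤ ‖s (k+1) - q‖ + ‖q‖ := by simpa using norm_add_le (s (k+1) - q) q
  have h6 := norm_sub_le (s k) q
  linarith

lemma summ (c : Core D f γ e L x s) : Summable fun k => 2 * (e k / γ (k+1)) := by
  apply Summable.mul_left
  refine Summable.of_nonneg_of_le (fun k => div_nonneg (c.he k) (c.hγ _).le) (fun k => ?_)
    (c.hA4.mul_right (γ 0)⁻¹)
  have h0 := c.hγ 0
  have : γ 0 ≤ ∑ i ∈ Finset.range (k+1), γ i :=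
    Finset.single_le_sum (fun i _ => (c.hγ i).le) (by simp)
  rw [mul_assoc]
  refine le_mul_of_one_le_right (div_nonneg (c.he k) (c.hγ _).le) ?_
  rw [← div_eq_mul_inv, le_div_iff₀ h0]; linarith

lemma quasi (c : Core D f γ e L x s) (m n : ℕ) (hmn : m ≤ n) :
    ‖s n‖ ≤ ‖s m‖ + ((∑' k, 2 * (e k / γ (k+1))) - ∑ k ∈ Finset.range m, 2 * (e k / γ (k+1))) := by
  have h1 : ‖s n‖ - ∑ k ∈ Finset.range n, 2 * (e k / γ (k+1)) ≤
      ‖s m‖ - ∑ k ∈ Finset.range m, 2 * (e k / γ (k+1)) := by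
    have : Antitone fun n => ‖s n‖ - ∑ k ∈ Finset.range n, 2 * (e k / γ (k+1)) := by
      apply antitone_nat_of_succ_le
      intro n
      rw [Finset.sum_range_succ]
      linarith [c.normstep n]
    exact this hmn
  have h2 := c.summ.sum_le_tsum (Finset.range n)
    (fun k _ => mul_nonneg zero_le_two (div_nonneg (c.he k) (c.hγ _).le))
  linarith

lemma bdd (c : Core D f γ e L x s) : ∃ M : ℝ, 0 ≤ M ∧ ∀ n, ‖s n‖ ≤ M := by
  refine ⟨‖s 0‖ + ∑' k, 2 * (e k / γ (k+1)), ?_, fun n => by simpa using c.quasi 0 n n.zero_le⟩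
  have := c.quasi 0 0 le_rfl
  simp only [Finset.range_zero, Finset.sum_empty, sub_zero] at this
  linarith [norm_nonneg (s 0)]

lemma energy (c : Core D f γ e L x s) {v : Y} (hv : v ∈ Pset D f) :
    ∃ C : ℝ, ∀ n, ∑ k ∈ Finset.range n, γ (k+1) * ⟪s (k+1) - v, s (k+1)⟫ ≤ C := by
  obtain ⟨G, hG⟩ := hv
  obtain ⟨M, hM0, hM⟩ := c.bdd
  have key : ∀ n, ∑ k ∈ Finset.range n, γ (k+1) * ⟪s (k+1) - v, s (k+1)⟫ ≤
      (f (x 0) - ⟪v, x 0⟫) - (f (x n) - ⟪v, x n⟫) + (M + ‖v‖) * ∑ k ∈ Finset.range n, e k := by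
    intro n
    induction n with
    | zero => simp
    | succ k ih =>
      rw [Finset.sum_range_succ, Finset.sum_range_succ, mul_add]
      have h2 := c.hsub (k+1) _ (c.hx k)
      have h3 : ⟪s (k+1) - v, x k - x (k+1)⟫ = γ (k+1) * ⟪s (k+1) - v, s (k+1)⟫
          - ⟪s (k+1) - v, L (k+1) - x k⟫ := by
        rw [c.diff, inner_sub_right, real_inner_smul_right]
      have h4 : ⟪s (k+1) - v, L (k+1) - x k⟫ ≤ (M + ‖v‖) * e k := by
        refine (real_inner_le_norm _ _).trans ?_
        refine mul_le_mul ((norm_sub_le _ _).trans ?_) (c.herr k) (norm_nonneg _) (by positivity)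
        linarith [hM (k+1)]
      rw [inner_sub_left _ v, inner_sub_right v] at h3
      linarith
  refine ⟨(f (x 0) - ⟪v, x 0⟫) + G + (M + ‖v‖) * ∑' k, e k, fun n => (key n).trans ?_⟩
  have h1 := hG _ (c.hx n)
  have h2 := mul_le_mul_of_nonneg_left (c.hsum.sum_le_tsum (Finset.range n) (fun k _ => c.he k))
    (by positivity : 0 ≤ M + ‖v‖)
  linarith

lemma unb (c : Core D f γ e L x s) (m : ℕ) :
    Tendsto (fun n : ℕ => ∑ i ∈ Finset.range n, γ (i+m)) atTop atTop := by
  have h1 := (tendsto_add_atTop_iff_nat m).2 c.hA5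
  have h2 := tendsto_atTop_add_const_right _ (-∑ i ∈ Finset.range m, γ i) h1
  refine h2.congr fun n => ?_
  rw [add_comm n m, Finset.sum_range_add]
  simp [add_comm]

lemma limsup_le (c : Core D f γ e L x s) {v : Y} (hv : v ∈ Pset D f) {δ : ℝ} (hδ : 0 < δ) :
    ∀ᶠ n in atTop, ‖s n‖ ≤ ‖v‖ + δ := by
  have ht := c.summ.hasSum.tendsto_sum_nat
  have ht' := ht.eventually (lt_mem_nhds (by linarith : (∑' k, 2 * (e k / γ (k+1))) - δ / 2 <
    ∑' k, 2 * (e k / γ (k+1))))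
  obtain ⟨m₀, hm₀⟩ := eventually_atTop.1 ht'
  have : ∃ m ≥ m₀, ‖s m‖ ≤ ‖v‖ + δ / 2 := by
    by_contra! hc
    obtain ⟨C, hC⟩ := c.energy hv
    have hlow : ∀ n, δ / 2 * (δ / 2) * ∑ i ∈ Finset.range n, γ (i + (m₀ + 1)) ≤
        C - ∑ k ∈ Finset.range m₀, γ (k+1) * ⟪s (k+1) - v, s (k+1)⟫ := by
      intro n
      have h1 := hC (m₀ + n)
      rw [Finset.sum_range_add] at h1
      have h2 : δ / 2 * (δ / 2) * ∑ i ∈ Finset.range n, γ (i + (m₀ + 1)) ≤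
          ∑ k ∈ Finset.range n, γ (m₀ + k+1) * ⟪s (m₀ + k+1) - v, s (m₀ + k+1)⟫ := by
        rw [Finset.mul_sum]
        refine Finset.sum_le_sum fun i _ => ?_
        rw [show i + (m₀ + 1) = m₀ + i + 1 by ring, mul_comm]
        refine mul_le_mul_of_nonneg_left ?_ (c.hγ _).le
        have h3 := hc (m₀ + i + 1) (by omega)
        rw [inner_sub_left, real_inner_self_eq_norm_mul_norm]
        have h4 := real_inner_le_norm v (s (m₀ + i + 1))
        nlinarith [norm_nonneg v, norm_nonneg (s (m₀ + i + 1))]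
      linarith
    have hu := (c.unb (m₀+1)).const_mul_atTop (by positivity : 0 < δ / 2 * (δ / 2))
    obtain ⟨n, hn⟩ := (hu.eventually_gt_atTop
      (C - ∑ k ∈ Finset.range m₀, γ (k+1) * ⟪s (k+1) - v, s (k+1)⟫)).exists
    linarith [hlow n]
  obtain ⟨m, hm, hmle⟩ := this
  filter_upwards [eventually_ge_atTop m] with n hn
  linarith [c.quasi m n hn, hm₀ m hm]

lemma memP (c : Core D f γ e L x s) (k : ℕ) : s k ∈ Pset D f := by
  refine ⟨⟪s k, x k⟫ - f (x k), fun w hw => ?_⟩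
  have := c.hsub k w hw
  rw [inner_sub_right] at this
  linarith

variable {p : Y}

lemma min_P (c : Core D f γ e L x s) (hle : ∀ k, ‖p‖ ≤ ‖s k‖) {v : Y} (hv : v ∈ Pset D f) :
    ‖p‖ ≤ ‖v‖ := by
  refine le_of_forall_pos_le_add fun δ hδ => ?_
  obtain ⟨n, hn⟩ := (c.limsup_le hv hδ).exists
  exact (hle n).trans hn

lemma proj (c : Core D f γ e L x s) (hp : p ∈ closure (Pset D f)) (hle : ∀ k, ‖p‖ ≤ ‖s k‖)
    (k : ℕ) : 0 ≤ ⟪s k - p, p⟫ := by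
  refine proj_ineq (Pset_convex D f).closure hp (fun w hw => ?_) (subset_closure (c.memP k))
  exact closure_minimal (fun v hv => c.min_P hle hv)
    (isClosed_le continuous_const continuous_norm) hw

lemma sq_le (c : Core D f γ e L x s) (hp : p ∈ closure (Pset D f)) (hle : ∀ k, ‖p‖ ≤ ‖s k‖)
    (k : ℕ) : ‖s k - p‖ ^ 2 ≤ ‖s k‖ ^ 2 - ‖p‖ ^ 2 := by
  have h := c.proj hp hle k
  rw [inner_sub_left, real_inner_self_eq_norm_sq] at h
  rw [norm_sub_sq_real]
  linarith

lemma tends (c : Core D f γ e L x s) (hp : p ∈ closure (Pset D f)) (hle : ∀ k, ‖p‖ ≤ ‖s k‖) :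
    Tendsto s atTop (nhds p) := by
  have hn : Tendsto (fun k => ‖s k‖) atTop (nhds ‖p‖) := by
    refine tendsto_order.2 ⟨fun a ha => Eventually.of_forall fun k => ha.trans_le (hle k),
      fun a ha => ?_⟩
    obtain ⟨v, hv, hvd⟩ := Metric.mem_closure_iff.1 hp ((a - ‖p‖) / 2) (by linarith)
    have hv2 : ‖v‖ ≤ ‖p‖ + dist p v := by
      rw [dist_comm, dist_eq_norm]; linarith [norm_sub_norm_le v p]
    filter_upwards [c.limsup_le hv (δ := (a - ‖p‖) / 4) (by linarith)] with n hn
    linarith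
  rw [tendsto_iff_norm_sub_tendsto_zero]
  have h0 : Tendsto (fun k => Real.sqrt (‖s k‖ ^ 2 - ‖p‖ ^ 2)) atTop (nhds 0) := by
    have := ((hn.pow 2).sub_const (‖p‖ ^ 2)).sqrt
    simpa using this
  exact squeeze_zero (fun _ => norm_nonneg _) (fun k => Real.le_sqrt_of_sq_le (c.sq_le hp hle k)) h0

lemma rate (c : Core D f γ e L x s) (hp : p ∈ Pset D f) (hle : ∀ k, ‖p‖ ≤ ‖s k‖) :
    ∃ C : ℝ, 0 ≤ C ∧ ∀ n, (∑ i ∈ Finset.range (n+1), γ i) * ‖s n - p‖ ^ 2 ≤ C := by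
  obtain ⟨C, hC⟩ := c.energy hp
  obtain ⟨M, hM0, hM⟩ := c.bdd
  have hpc := subset_closure hp
  set T := ∑' k, e k / γ (k+1) * ∑ i ∈ Finset.range (k+1), γ i
  have key : ∀ n, (∑ i ∈ Finset.range (n+1), γ i) * (‖s n‖ ^ 2 - ‖p‖ ^ 2) ≤
      γ 0 * (‖s 0‖ ^ 2 - ‖p‖ ^ 2)
      + 4 * M * ∑ k ∈ Finset.range n, (e k / γ (k+1) * ∑ i ∈ Finset.range (k+1), γ i)
      + 2 * ∑ k ∈ Finset.range n, γ (k+1) * ⟪s (k+1) - p, s (k+1)⟫ := by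
    intro n
    induction n with
    | zero => simp
    | succ k ih =>
      rw [Finset.sum_range_succ γ (k+1),
        Finset.sum_range_succ (fun k => e k / γ (k+1) * ∑ i ∈ Finset.range (k+1), γ i) k,
        Finset.sum_range_succ (fun k => γ (k+1) * ⟪s (k+1) - p, s (k+1)⟫) k]
      set S := ∑ i ∈ Finset.range (k+1), γ i
      have hS : 0 ≤ S := Finset.sum_nonneg fun i _ => (c.hγ i).le
      have hq : 0 ≤ e k / γ (k+1) := div_nonneg (c.he k) (c.hγ _).le
      have h1 : ‖s (k+1)‖ ^ 2 - ‖s k‖ ^ 2 ≤ 4 * M * (e k / γ (k+1)) := by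
        have := c.normstep k
        have a1 := hM k
        have a2 := hM (k+1)
        have a3 := norm_nonneg (s k)
        have a4 := norm_nonneg (s (k+1))
        nlinarith [mul_le_mul_of_nonneg_right this (add_nonneg a3 a4),
          mul_le_mul_of_nonneg_left (add_le_add a1 a2) hq]
      have h1' := mul_le_mul_of_nonneg_left h1 hS
      have h2 : ‖s (k+1)‖ ^ 2 - ‖p‖ ^ 2 ≤ 2 * ⟪s (k+1) - p, s (k+1)⟫ := by
        have := sq_nonneg ‖s (k+1) - p‖
        rw [norm_sub_sq_real] at this
        rw [inner_sub_left, real_inner_self_eq_norm_sq, real_inner_comm]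
        linarith
      have h2' := mul_le_mul_of_nonneg_left h2 (c.hγ (k+1)).le
      nlinarith
  have hb0 : 0 ≤ ‖s 0‖ ^ 2 - ‖p‖ ^ 2 := (sq_nonneg _).trans (c.sq_le hpc hle 0)
  have hall : ∀ n, (∑ i ∈ Finset.range (n+1), γ i) * ‖s n - p‖ ^ 2 ≤
      γ 0 * (‖s 0‖ ^ 2 - ‖p‖ ^ 2) + 4 * M * T + 2 * C := by
    intro n
    have h1 := mul_le_mul_of_nonneg_left (c.sq_le hpc hle n)
      (Finset.sum_nonneg fun i (_ : i ∈ Finset.range (n+1)) => (c.hγ i).le)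
    have h2 := mul_le_mul_of_nonneg_left (c.hA4.sum_le_tsum (Finset.range n) (fun k _ =>
      mul_nonneg (div_nonneg (c.he k) (c.hγ _).le) (Finset.sum_nonneg fun i _ => (c.hγ i).le)))
      (by positivity : 0 ≤ 4 * M)
    linarith [key n, hC n]
  exact ⟨_, le_trans (mul_nonneg (Finset.sum_nonneg fun i _ => (c.hγ i).le) (sq_nonneg _)) (hall 0),
    hall⟩

lemma sqrt_aux {E A a b : ℝ} (hE : 0 ≤ E) (hA : 0 ≤ A) (hb : 0 ≤ b) {t : ℝ} (ha : 0 ≤ a)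
    (h1 : a ≤ E + √A) (h2 : t ^ 2 ≤ a ^ 2 + b) : t ≤ E + √(A + b) := by
  apply le_of_sq_le_sq _ (by positivity)
  have h3 := Real.sqrt_le_sqrt (by linarith : A ≤ A + b)
  have h4 := Real.sq_sqrt hA
  have h5 := Real.sq_sqrt (by linarith : 0 ≤ A + b)
  have h6 := pow_le_pow_left₀ ha h1 2
  nlinarith [mul_le_mul_of_nonneg_left h3 hE]

lemma drift (c : Core D f γ e L x s) (hpc : p ∈ closure (Pset D f)) (hle : ∀ k, ‖p‖ ≤ ‖s k‖)
    {δ : ℝ} (hδ : 0 ≤ δ) {z : Y} (hz : z ∈ D)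
    (hmin : ∀ w ∈ D, f z - ⟪p, z⟫ ≤ f w - ⟪p, w⟫ + δ) (n : ℕ) :
    ‖x n + (∑ i ∈ Finset.range (n+1), γ i) • p - z‖ ≤ (∑' k, e k) +
      √(‖L 0 - z‖ ^ 2 + 2 * δ * ∑ i ∈ Finset.range (n+1), γ i) := by
  have step : ∀ n E, 0 ≤ E → ‖L n + (∑ i ∈ Finset.range n, γ i) • p - z‖ ≤ E +
      √(‖L 0 - z‖ ^ 2 + 2 * δ * ∑ i ∈ Finset.range n, γ i) →
      ‖x n + (∑ i ∈ Finset.range (n+1), γ i) • p - z‖ ≤ E +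
      √(‖L 0 - z‖ ^ 2 + 2 * δ * ∑ i ∈ Finset.range (n+1), γ i) := by
    intro n E hE h
    have hS : 0 ≤ ∑ i ∈ Finset.range (n+1), γ i := Finset.sum_nonneg fun i _ => (c.hγ i).le
    have hS' : 0 ≤ ∑ i ∈ Finset.range n, γ i := Finset.sum_nonneg fun i _ => (c.hγ i).le
    have hg := c.hγ n
    rw [show ‖L 0 - z‖ ^ 2 + 2 * δ * ∑ i ∈ Finset.range (n+1), γ i =
      ‖L 0 - z‖ ^ 2 + 2 * δ * ∑ i ∈ Finset.range n, γ i + 2 * δ * γ n by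
        rw [Finset.sum_range_succ]; ring]
    refine sqrt_aux hE (by positivity) (by positivity) (norm_nonneg _) h ?_
    set ν := x n + (∑ i ∈ Finset.range (n+1), γ i) • p - z with hν
    have hrel : L n + (∑ i ∈ Finset.range n, γ i) • p - z = ν + γ n • (s n - p) := by
      rw [hν, c.hstep n, Finset.sum_range_succ, add_smul, smul_sub]; abel
    have h1 : -δ ≤ ⟪s n - p, ν⟫ := by
      have a1 := c.hsub n z hz
      have a2 := hmin _ (c.hx n)
      have a3 := mul_nonneg hS (c.proj hpc hle n)
      have : ⟪s n - p, ν⟫ = - ⟪s n, z - x n⟫ + ⟪p, z⟫ - ⟪p, x n⟫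
          + (∑ i ∈ Finset.range (n+1), γ i) * ⟪s n - p, p⟫ := by
        rw [hν, inner_sub_right, inner_add_right, real_inner_smul_right, inner_sub_right,
          inner_sub_left _ _ (x n), inner_sub_left _ _ z]
        ring
      linarith
    rw [hrel, norm_add_sq_real, real_inner_smul_right, real_inner_comm]
    nlinarith [sq_nonneg ‖γ n • (s n - p)‖, mul_le_mul_of_nonneg_left h1 hg.le]
  have main : ∀ n, ‖L n + (∑ i ∈ Finset.range n, γ i) • p - z‖ ≤ (∑ k ∈ Finset.range n, e k) +
      √(‖L 0 - z‖ ^ 2 + 2 * δ * ∑ i ∈ Finset.range n, γ i) := by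
    intro n
    induction n with
    | zero => simp
    | succ n ih =>
      have h1 := step n _ (Finset.sum_nonneg fun i _ => c.he i) ih
      have h2 : L (n+1) + (∑ i ∈ Finset.range (n+1), γ i) • p - z =
        (x n + (∑ i ∈ Finset.range (n+1), γ i) • p - z) + (L (n+1) - x n) := by abel
      rw [h2]
      refine (norm_add_le _ _).trans ?_
      rw [Finset.sum_range_succ e]
      linarith [c.herr n]
  exact step n _ (tsum_nonneg c.he) ((main n).trans
    (by linarith [c.hsum.sum_le_tsum (Finset.range n) (fun k _ => c.he k)]))

lemma prod (c : Core D f γ e L x s) (hp : p ∈ Pset D f) (hle : ∀ k, ‖p‖ ≤ ‖s k‖)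
    (τ : ℝ) (hτ : 0 < τ) : ∀ᶠ n in atTop, ⟪s n - p, x n⟫ ≤ τ := by
  have hpc := subset_closure hp
  obtain ⟨C, hC0, hC⟩ := c.rate hp hle
  obtain ⟨G, hG⟩ := hp
  -- choose an approximate minimizer
  set δ : ℝ := τ ^ 2 / (16 * (C + 1)) with hδ
  have hδ0 : 0 < δ := by positivity
  obtain ⟨z, hz, hzmin⟩ : ∃ z ∈ D, ∀ w ∈ D, f z - ⟪p, z⟫ ≤ f w - ⟪p, w⟫ + δ := by
    have hne : ((fun w => f w - ⟪p, w⟫) '' D).Nonempty := ⟨_, x 0, c.hx 0, rfl⟩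
    have hbd : BddBelow ((fun w => f w - ⟪p, w⟫) '' D) := by
      refine ⟨-G, ?_⟩
      rintro _ ⟨w, hw, rfl⟩
      have := hG w hw
      simp only
      linarith
    obtain ⟨_, ⟨z, hz, rfl⟩, hlt⟩ := exists_lt_of_csInf_lt hne
      (lt_add_of_pos_right (sInf ((fun w => f w - ⟪p, w⟫) '' D)) hδ0)
    refine ⟨z, hz, fun w hw => ?_⟩
    have := csInf_le hbd ⟨w, hw, rfl⟩
    simp only at this hlt
    linarith
  set K : ℝ := ‖z‖ + (∑' k, e k) + ‖L 0 - z‖ with hK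
  have hK0 : 0 ≤ K := by 
    have : 0 ≤ ∑' k, e k := tsum_nonneg c.he
    positivity
  have hbig := ((tendsto_add_atTop_iff_nat 1).2 c.hA5).eventually_ge_atTop
    (K ^ 2 * (C + 1) * 4 / τ ^ 2 + 1)
  filter_upwards [hbig] with n hn
  set S := ∑ i ∈ Finset.range (n+1), γ i with hS
  have hq : 0 ≤ K ^ 2 * (C + 1) * 4 / τ ^ 2 := by positivity
  have hS0 : 0 < S := by linarith
  have hd := c.drift hpc hle hδ0.le hz hzmin n
  rw [← hS] at hd
  have h1 : ‖x n + S • p‖ ≤ K + √(2 * δ * S) := by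
    have a1 : ‖x n + S • p‖ ≤ ‖x n + S • p - z‖ + ‖z‖ := by
      simpa using norm_add_le (x n + S • p - z) z
    have a2 : √(‖L 0 - z‖ ^ 2 + 2 * δ * S) ≤ ‖L 0 - z‖ + √(2 * δ * S) := by
      refine Real.sqrt_le_iff.2 ⟨by positivity, ?_⟩
      have b1 := Real.sq_sqrt (by positivity : 0 ≤ 2 * δ * S)
      have b2 := mul_nonneg (norm_nonneg (L 0 - z)) (Real.sqrt_nonneg (2 * δ * S))
      nlinarith
    linarith
  have h2 : ⟪s n - p, x n⟫ ≤ ‖s n - p‖ * ‖x n + S • p‖ := by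
    refine le_trans ?_ (real_inner_le_norm _ _)
    rw [inner_add_right, real_inner_smul_right]
    linarith [mul_nonneg hS0.le (c.proj hpc hle n)]
  have h3 : ‖s n - p‖ * K ≤ τ / 2 := by
    apply le_of_sq_le_sq _ (by positivity)
    have hn' : K ^ 2 * (C + 1) * 4 ≤ S * τ ^ 2 := by
      rw [← div_le_iff₀ (by positivity)]; linarith
    have hCn := hC n
    have : S * ((‖s n - p‖ * K) ^ 2) ≤ S * (τ / 2) ^ 2 := by
      nlinarith [mul_le_mul_of_nonneg_right hCn (sq_nonneg K)]
    exact le_of_mul_le_mul_left this hS0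
  have h4 : ‖s n - p‖ * √(2 * δ * S) ≤ τ / 2 := by
    apply le_of_sq_le_sq _ (by positivity)
    rw [mul_pow, Real.sq_sqrt (by positivity)]
    have e1 : δ * (C + 1) * 16 = τ ^ 2 := by rw [hδ]; field_simp
    nlinarith [mul_le_mul_of_nonneg_left (hC n) hδ0.le]
  calc _ ≤ _ := h2
    _ ≤ ‖s n - p‖ * (K + √(2 * δ * S)) := mul_le_mul_of_nonneg_left h1 (norm_nonneg _)
    _ ≤ τ := by rw [mul_add]; linarith

end Core
end Core

section Glue
variable {Y : Type*} [NormedAddCommGroup Y] [InnerProductSpace ℝ Y]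

lemma coe_f {h : Y → EReal} (hb : ∀ u, h u ≠ ⊥) {u : Y} (hu : h u ≠ ⊤) :
    h u = (((h u).toReal : ℝ) : EReal) := (EReal.coe_toReal hu (hb u)).symm

lemma fenchel_le_iff {h : Y → EReal} (hb : ∀ u, h u ≠ ⊥) (v : Y) (G : ℝ) :
    fenchel h v ≤ (G : EReal) ↔ ∀ w ∈ {u | h u ≠ ⊤}, ⟪v, w⟫ - (h w).toReal ≤ G := by
  unfold fenchel
  rw [iSup_le_iff]
  refine forall_congr' fun w => ?_
  by_cases hw : h w = ⊤
  · simp [hw]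
  · have : w ∈ {u | h u ≠ ⊤} := hw
    simp only [this, forall_true_left]
    conv_lhs => rw [coe_f hb hw]
    rw [← EReal.coe_sub, EReal.coe_le_coe_iff]

lemma fenchel_lsc {h : Y → EReal} (hb : ∀ u, h u ≠ ⊥) : LowerSemicontinuous (fenchel h) := by
  unfold fenchel
  refine lowerSemicontinuous_iSup fun w => ?_
  by_cases hw : h w = ⊤
  · simp only [hw, EReal.sub_top]
    exact lowerSemicontinuous_const
  · rw [coe_f hb hw]
    simp only [← EReal.coe_sub]
    apply Continuous.lowerSemicontinuous
    exact continuous_coe_real_ereal.comp (by fun_prop)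

lemma subdiff_mem_P {h : Y → EReal} (hb : ∀ u, h u ≠ ⊥) (ht : ∃ u, h u ≠ ⊤) {u v : Y}
    (hv : v ∈ subdiff h u) : v ∈ Pset {u | h u ≠ ⊤} (fun u => (h u).toReal) := by
  have hu : h u ≠ ⊤ := by
    intro hu
    obtain ⟨w, hw⟩ := ht
    have := hv w
    rw [hu, EReal.top_add_coe, top_le_iff] at this
    exact hw this
  refine ⟨⟪v, u⟫ - (h u).toReal, fun w hw => ?_⟩
  have := hv w
  rw [coe_f hb hu, coe_f hb hw, ← EReal.coe_add, EReal.coe_le_coe_iff, inner_sub_right] at this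
  linarith

lemma prox_sub {h : Y → EReal} (hb : ∀ u, h u ≠ ⊥) (ht : ∃ u, h u ≠ ⊤)
    (hcvx : ∀ u v : Y, ∀ a b : ℝ, 0 ≤ a → 0 ≤ b → a + b = 1 →
      h (a • u + b • v) ≤ (a : EReal) * h u + (b : EReal) * h v)
    {g : ℝ} (hg : 0 < g) {l x : Y}
    (hmin : ∀ μ : Y, h x + ((‖l - x‖ ^ 2 / (2 * g) : ℝ) : EReal)
        ≤ h μ + ((‖l - μ‖ ^ 2 / (2 * g) : ℝ) : EReal)) :
    h x ≠ ⊤ ∧ ∀ w, h w ≠ ⊤ → (h x).toReal + ⟪g⁻¹ • (l - x), w - x⟫ ≤ (h w).toReal := by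
  have hx : h x ≠ ⊤ := by
    intro hx
    obtain ⟨w, hw⟩ := ht
    have := hmin w
    rw [hx, EReal.top_add_coe, coe_f hb hw, ← EReal.coe_add, top_le_iff] at this
    exact EReal.coe_ne_top _ this
  refine ⟨hx, fun w hw => ?_⟩
  have key : ∀ t : ℝ, 0 < t → t ≤ 1 → (h x).toReal + ⟪g⁻¹ • (l - x), w - x⟫ ≤
      (h w).toReal + t * (‖w - x‖ ^ 2 / (2 * g)) := by
    intro t ht0 ht1
    have h1 := hcvx x w (1 - t) t (by linarith) ht0.le (by ring)
    rw [coe_f hb hx, coe_f hb hw, ← EReal.coe_mul, ← EReal.coe_mul, ← EReal.coe_add] at h1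
    have h2 := (hmin ((1 - t) • x + t • w)).trans (add_le_add_left h1 _)
    rw [coe_f hb hx, ← EReal.coe_add, ← EReal.coe_add, EReal.coe_le_coe_iff,
      show l - ((1 - t) • x + t • w) = (l - x) - t • (w - x) by module,
      norm_sub_sq_real (l - x), norm_smul, real_inner_smul_right, Real.norm_of_nonneg ht0.le] at h2
    simp only [EReal.toReal_coe] at h2
    rw [real_inner_smul_left]
    have h3 : t * ((h x).toReal + g⁻¹ * ⟪l - x, w - x⟫) ≤
        t * ((h w).toReal + t * (‖w - x‖ ^ 2 / (2 * g))) := by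
      have e1 : (‖l - x‖ ^ 2 - 2 * (t * ⟪l - x, w - x⟫) + (t * ‖w - x‖) ^ 2) / (2 * g) =
        ‖l - x‖ ^ 2 / (2 * g) - t * (g⁻¹ * ⟪l - x, w - x⟫) + t * (t * (‖w - x‖ ^ 2 / (2 * g))) := by
        field_simp
      rw [e1] at h2
      linarith
    exact le_of_mul_le_mul_left h3 ht0
  set B := ‖w - x‖ ^ 2 / (2 * g) with hB
  have hB0 : 0 ≤ B := by positivity
  refine le_of_forall_pos_le_add fun δ hδ => ?_
  have h1 := key (min 1 (δ / (B + 1))) (lt_min one_pos (by positivity)) (min_le_left _ _)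
  have h2 : min 1 (δ / (B + 1)) * B ≤ δ := by
    refine (mul_le_mul_of_nonneg_right (min_le_right _ _) hB0).trans ?_
    rw [div_mul_eq_mul_div, div_le_iff₀ (by positivity)]
    nlinarith
  linarith

end Glue

theorem statement9
    {Y : Type*}
    [NormedAddCommGroup Y] [InnerProductSpace ℝ Y] [CompleteSpace Y]
    (h : Y → EReal)
    (hh_bot : ∀ u : Y, h u ≠ ⊥) (hh_top : ∃ u : Y, h u ≠ ⊤)
    (hh_lsc : LowerSemicontinuous h)
    (hh_cvx : ∀ u v : Y, ∀ a b : ℝ, 0 ≤ a → 0 ≤ b → a + b = 1 →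
      h (a • u + b • v) ≤ (a : EReal) * h u + (b : EReal) * h v)
    (γ : ℕ → ℝ) (hγ : ∀ k : ℕ, 0 < γ k) (ε : ℕ → ℝ) (hε : ∀ k : ℕ, 0 ≤ ε k)
    (lam lamstar sstar ss : ℕ → Y)
    (hmin : ∀ (k : ℕ) (μ : Y),
      h (lamstar (k+1)) + ((‖lam k - lamstar (k+1)‖ ^ 2 / (2 * γ k) : ℝ) : EReal)
        ≤ h μ + ((‖lam k - μ‖ ^ 2 / (2 * γ k) : ℝ) : EReal))
    (hsstar : ∀ k : ℕ, sstar (k+1) = (γ k)⁻¹ • (lam k - lamstar (k+1)))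
    (herr : ∀ k : ℕ, ‖lam (k+1) - lamstar (k+1)‖ ≤ ε (k+1))
    (hss : ∀ k : ℕ, ss (k+1) = (γ k)⁻¹ • (lam k - lam (k+1)))
    (A1 : Summable ε)
    (A2 : (fun k : ℕ => ε (k+1) / γ k * ∑ i ∈ Finset.range (k+1), γ i)
        =O[atTop] fun k : ℕ => 1 / Real.sqrt (∑ i ∈ Finset.range (k+1), γ i))
    (A3 : Summable fun k : ℕ => (ε (k+1) / γ (k+1)) ^ 2 * ∑ i ∈ Finset.range (k+1), γ i)
    (A4 : Summable fun k : ℕ => ε (k+1) / γ (k+1) * ∑ i ∈ Finset.range (k+1), γ i)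
    (A5 : Tendsto (fun n : ℕ => ∑ i ∈ Finset.range n, γ i) atTop atTop)
    (sbar : Y)
    (hsbar_mem : sbar ∈ closure {v : Y | ∃ u : Y, v ∈ subdiff h u})
    (hsbar_min : ∀ v ∈ closure {v : Y | ∃ u : Y, v ∈ subdiff h u}, ‖sbar‖ ≤ ‖v‖)
    :
    Tendsto (fun k : ℕ => fenchel h (sstar k)) atTop (nhds (fenchel h sbar)) := by
  have hprox := fun k => prox_sub hh_bot hh_top hh_cvx (hγ k) (hmin k)
  have c : Core {u | h u ≠ ⊤} (fun u => (h u).toReal) γ (fun k => ε (k+1)) lam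
      (fun k => lamstar (k+1)) (fun k => sstar (k+1)) :=
    { hγ := hγ
      he := fun k => hε _
      hx := fun k => (hprox k).1
      hsub := fun k w hw => by
        simp only [hsstar]
        exact (hprox k).2 w hw
      hstep := fun k => by
        simp only [hsstar, smul_smul]
        rw [mul_inv_cancel₀ (hγ k).ne', one_smul]; abel
      herr := herr
      hsum := (summable_nat_add_iff 1).2 A1
      hA4 := A4
      hA5 := A5 }
  have hle : ∀ k, ‖sbar‖ ≤ ‖sstar (k+1)‖ := by
    intro k
    refine hsbar_min _ (subset_closure ⟨lamstar (k+1), fun w => ?_⟩)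
    by_cases hw : h w = ⊤
    · rw [hw]; exact le_top
    · rw [coe_f hh_bot hw, coe_f hh_bot (c.hx k), ← EReal.coe_add, EReal.coe_le_coe_iff]
      exact c.hsub k w hw
  have hpc : sbar ∈ closure (Pset {u | h u ≠ ⊤} (fun u => (h u).toReal)) :=
    by
    refine closure_mono ?_ hsbar_mem
    rintro v ⟨u, hv⟩
    exact subdiff_mem_P hh_bot hh_top hv
  have htend := c.tends hpc hle
  rw [← tendsto_add_atTop_iff_nat 1]
  refine tendsto_order.2 ⟨fun a ha => ?_, fun a ha => ?_⟩
  · exact htend.eventually (fenchel_lsc hh_bot sbar a ha)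
  · -- the conjugate at `sbar` is finite
    have hGtop : fenchel h sbar ≠ ⊤ := ne_top_of_lt ha
    have hGbot : fenchel h sbar ≠ ⊥ := by
      obtain ⟨u, hu⟩ := hh_top
      have h1 : ((⟪sbar, u⟫ : ℝ) : EReal) - h u ≤ fenchel h sbar :=
        le_iSup (fun l : Y => ((⟪sbar, l⟫ : ℝ) : EReal) - h l) u
      rw [coe_f hh_bot hu, ← EReal.coe_sub] at h1
      intro h2
      rw [h2, le_bot_iff] at h1
      exact EReal.coe_ne_bot _ h1
    have hGe : fenchel h sbar = ((fenchel h sbar).toReal : EReal) :=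
      (EReal.coe_toReal hGtop hGbot).symm
    set G := (fenchel h sbar).toReal with hG
    have hGle := (fenchel_le_iff hh_bot sbar G).1 hGe.le
    have hp : sbar ∈ Pset {u | h u ≠ ⊤} (fun u => (h u).toReal) := ⟨G, hGle⟩
    rw [hGe] at ha
    obtain ⟨b, hb1, hb2⟩ := EReal.lt_iff_exists_real_btwn.1 ha
    rw [EReal.coe_lt_coe_iff] at hb1
    filter_upwards [c.prod hp hle (b - G) (by linarith)] with n hn
    refine lt_of_le_of_lt ((fenchel_le_iff hh_bot _ b).2 fun w hw => ?_) hb2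
    have h1 := c.hsub n w hw
    have h2 := hGle _ (c.hx n)
    simp only [inner_sub_right, inner_sub_left] at h1 hn
    linarith
end
end
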